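/- arXiv:1510.00756 — 4 statements merged into one kernel-verified Lean document; each statement's English description precedes it below -/
import Mathlib

section
/- Let G be a factor graph with n variables, at most s possible states per variable, e factors, maximum factor weight M, and hierarchy width h. Then the mixing time of Gibbs sampling on G satisfies t_mix ≤ (log 4 + n·log s + e·M) · n · exp(3·h·M). -/
/-- Connectivity relation between hyperedges (factors) within the edge set `E` of a
hypergraph whose hyperedges have vertex sets given by `dep`. -/
def EdgeConn {α ι : Type*} (dep : ι → Finset α) (E : Finset ι) : ι → ι → Prop :=
  Relation.ReflTransGen fun a b => a ∈ E ∧ b ∈ E ∧ ∃ v, v ∈ dep a ∧ v ∈ dep b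

open Classical in
/-- Hierarchy width of the hypergraph with hyperedges `E`, where hyperedge `e` consists of
the vertices `dep e`.  It is `0` if there are no hyperedges; for a connected hypergraph with
at least one hyperedge it is `1 +` the minimum over removals of one hyperedge; for a
disconnected hypergraph it is the maximum over its connected components.  (Equivalently, as
implemented here: the maximum, over connected components `C` of the edge set, of
`1 + min over f ∈ C of hw (C \ {f})`.) -/
noncomputable def hw {α ι : Type*} [DecidableEq ι] (dep : ι → Finset α) (E : Finset ι) : ℕ :=
  E.sup fun e =>
    1 + ((E.filter fun f => EdgeConn dep E e f).attach.inf fun f =>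
      ((hw dep ((E.filter fun f => EdgeConn dep E e f).erase f.1) : ℕ∞))).toNat
termination_by E.card
decreasing_by
  exact lt_of_lt_of_le (Finset.card_erase_lt_of_mem f.2)
    (Finset.card_le_card (Finset.filter_subset _ _))

/-- The Gibbs distribution `π(x) = exp(energy x) / Z` on worlds `V → S`. -/
noncomputable def gibbsPi {V S : Type*} [Fintype V] [DecidableEq V] [Fintype S] [DecidableEq S]
    (energy : (V → S) → ℝ) (x : V → S) : ℝ :=
  Real.exp (energy x) / ∑ y : V → S, Real.exp (energy y)

/-- The transition matrix of Gibbs sampling: pick a variable `v` uniformly at random and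
resample it from its conditional distribution given the other variables. -/
noncomputable def gibbsP {V S : Type*} [Fintype V] [DecidableEq V] [Fintype S] [DecidableEq S]
    (energy : (V → S) → ℝ) : Matrix (V → S) (V → S) ℝ :=
  fun x y =>
    (Fintype.card V : ℝ)⁻¹ * ∑ v : V,
      if ∀ u, u ≠ v → x u = y u then
        Real.exp (energy y) / ∑ s : S, Real.exp (energy (Function.update x v s))
      else 0

/-- The chain with transition matrix `P` is, at time `t`, within total variation distance
`1/4` of `pi`, from every starting state. -/
def MixedAt {Ω : Type*} [Fintype Ω] [DecidableEq Ω] (P : Matrix Ω Ω ℝ) (pi : Ω → ℝ)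
    (t : ℕ) : Prop :=
  ∀ x : Ω, ∀ A : Finset Ω, |∑ y ∈ A, ((P ^ t) x y - pi y)| ≤ 1 / 4

/-!
With `n` variables and hierarchy width `h`, the Gibbs distribution satisfies the Poincaré
inequality `Var_π f ≤ exp (h M) * ∑ v, E_π [Var_v f]`, where `Var_v` resamples only the variable
`v`. One follows the recursion that defines the hierarchy width. Without factors `π` is a product
measure and the inequality is Efron–Stein with constant `1`; putting back a factor multiplies the
density by a function whose maximum is at most `exp M` times its minimum, which worsens the constant
by at most `exp M` (Holley–Stroock); and disconnected components make `π` a product, for which the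
constant does not grow.

Gibbs sampling averages `n` orthogonal projections of `L²(π)`, so it is positive semidefinite, and
the Poincaré inequality bounds its norm on mean-zero functions by `1 - γ` with
`γ = exp (-h M) / n`. Applied to a centred indicator, of squared norm at most `1/4`, this bounds the
squared total variation distance at time `t` by `(1 - γ) ^ (2 t) / (4 π_min)`, with
`π_min ≥ exp (-(n log s + e M))`. Because of the exponent `2 t`, half of the stated time suffices,
which leaves room for rounding to an integer.
-/

/-! ### Weighted means and variances -/

section WeightedVariance

variable {Ω α β : Type*} [Fintype Ω] [Fintype α] [Fintype β]

/-- Mean of `f` under the probability measure proportional to the weight `w`; it is `0` when the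
total weight is `0`. -/
noncomputable def wMean (w f : Ω → ℝ) : ℝ :=
  (∑ x, w x * f x) / ∑ x, w x

/-- Variance of `f` under the measure with weight `w`, not divided by the total weight. -/
noncomputable def wVar (w f : Ω → ℝ) : ℝ :=
  ∑ x, w x * (f x - wMean w f) ^ 2

lemma wMean_mul_sum {w : Ω → ℝ} (w_nonneg : 0 ≤ w) (f : Ω → ℝ) :
    wMean w f * ∑ x, w x = ∑ x, w x * f x := by
  by_cases hW : ∑ x, w x = 0
  · have hw0 : ∀ x, w x = 0 := by
      simpa using (Finset.sum_eq_zero_iff_of_nonneg fun x _ => w_nonneg x).1 hW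
    simp [hw0]
  · exact div_mul_cancel₀ _ hW

lemma wMean_sub (w f g : Ω → ℝ) :
    wMean w (fun x => f x - g x) = wMean w f - wMean w g := by
  simp only [wMean, mul_sub, Finset.sum_sub_distrib, sub_div]

lemma wMean_const_mul {c : ℝ} (hc : c ≠ 0) (w f : Ω → ℝ) :
    wMean (fun x => c * w x) f = wMean w f := by
  simp only [wMean, mul_assoc, ← Finset.mul_sum]
  exact mul_div_mul_left _ _ hc

lemma wVar_const_mul (c : ℝ) (w f : Ω → ℝ) : wVar (fun x => c * w x) f = c * wVar w f := by
  rcases eq_or_ne c 0 with rfl | hc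
  · simp [wVar]
  · simp only [wVar, wMean_const_mul hc, mul_assoc, Finset.mul_sum]

lemma wMean_comm (u : α → ℝ) (w : β → ℝ) (f : α → β → ℝ) :
    wMean w (fun b => wMean u fun a => f a b) = wMean u (fun a => wMean w (f a)) := by
  simp only [wMean, mul_div_assoc', ← Finset.sum_div, Finset.mul_sum]
  rw [div_right_comm, Finset.sum_comm]
  simp only [mul_left_comm]

lemma sum_mul_sub_sq {w : Ω → ℝ} (w_nonneg : 0 ≤ w) (f : Ω → ℝ) (c : ℝ) :
    ∑ x, w x * (f x - c) ^ 2 = wVar w f + (∑ x, w x) * (wMean w f - c) ^ 2 := by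
  have expand (d : ℝ) : ∑ x, w x * (f x - d) ^ 2 =
      ∑ x, w x * f x ^ 2 - 2 * d * ∑ x, w x * f x + d ^ 2 * ∑ x, w x := by
    rw [Finset.mul_sum, Finset.mul_sum, ← Finset.sum_sub_distrib, ← Finset.sum_add_distrib]
    exact Finset.sum_congr rfl fun x _ => by ring
  rw [wVar, expand, expand, ← wMean_mul_sum w_nonneg f]
  ring

lemma wVar_nonneg {w : Ω → ℝ} (w_nonneg : 0 ≤ w) (f : Ω → ℝ) : 0 ≤ wVar w f :=
  Finset.sum_nonneg fun x _ => mul_nonneg (w_nonneg x) (sq_nonneg _)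

lemma wVar_le_sum_mul_sub_sq {w : Ω → ℝ} (w_nonneg : 0 ≤ w) (f : Ω → ℝ) (c : ℝ) :
    wVar w f ≤ ∑ x, w x * (f x - c) ^ 2 := by
  rw [sum_mul_sub_sq w_nonneg]
  exact le_add_of_nonneg_right
    (mul_nonneg (Finset.sum_nonneg fun x _ => w_nonneg x) (sq_nonneg _))

lemma wVar_const {w : Ω → ℝ} (w_nonneg : 0 ≤ w) (c : ℝ) : wVar w (fun _ => c) = 0 :=
  le_antisymm (by simpa using wVar_le_sum_mul_sub_sq w_nonneg (fun _ => c) c)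
    (wVar_nonneg w_nonneg _)

lemma sum_mul_wMean_sq_le {w : Ω → ℝ} (w_nonneg : 0 ≤ w) (f : Ω → ℝ) :
    (∑ x, w x) * wMean w f ^ 2 ≤ ∑ x, w x * f x ^ 2 := by
  have h := sum_mul_sub_sq w_nonneg f 0
  simp only [sub_zero] at h
  linarith [wVar_nonneg w_nonneg f]

lemma wVar_le_mul_wVar {w w' : Ω → ℝ} (w_nonneg : 0 ≤ w) {b : ℝ}
    (h : ∀ x, w x ≤ b * w' x) (f : Ω → ℝ) : wVar w f ≤ b * wVar w' f :=
  calc wVar w f ≤ ∑ x, w x * (f x - wMean w' f) ^ 2 := wVar_le_sum_mul_sub_sq w_nonneg f _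
    _ ≤ ∑ x, b * w' x * (f x - wMean w' f) ^ 2 :=
        Finset.sum_le_sum fun x _ => mul_le_mul_of_nonneg_right (h x) (sq_nonneg _)
    _ = b * wVar w' f := by simp only [wVar, mul_assoc, Finset.mul_sum]

lemma sum_mul_wVar_wMean_le {u : α → ℝ} {w : β → ℝ} (u_nonneg : 0 ≤ u) (w_nonneg : 0 ≤ w)
    (f : α → β → ℝ) :
    (∑ a, u a) * wVar w (fun b => wMean u fun a => f a b) ≤ ∑ a, u a * wVar w (f a) := by
  simp only [wVar, Finset.mul_sum (Finset.univ : Finset β)]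
  rw [Finset.sum_comm]
  refine Finset.sum_le_sum fun b _ => ?_
  rw [wMean_comm, ← wMean_sub, mul_left_comm]
  simp only [mul_left_comm _ (w b), ← Finset.mul_sum]
  exact mul_le_mul_of_nonneg_left (sum_mul_wMean_sq_le u_nonneg _) (w_nonneg b)

lemma wVar_prod_le {u : α → ℝ} {w : β → ℝ} (u_nonneg : 0 ≤ u) (w_nonneg : 0 ≤ w)
    (f : α → β → ℝ) :
    wVar (fun p : α × β => u p.1 * w p.2) (fun p => f p.1 p.2) ≤
      ∑ b, w b * wVar u (fun a => f a b) + ∑ a, u a * wVar w (f a) := by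
  set g : β → ℝ := fun b => wMean u fun a => f a b
  calc wVar (fun p : α × β => u p.1 * w p.2) (fun p => f p.1 p.2)
      ≤ ∑ p : α × β, u p.1 * w p.2 * (f p.1 p.2 - wMean w g) ^ 2 :=
        wVar_le_sum_mul_sub_sq (fun p : α × β => mul_nonneg (u_nonneg p.1) (w_nonneg p.2)) _ _
    _ = ∑ b, w b * ∑ a, u a * (f a b - wMean w g) ^ 2 := by
        simp only [Fintype.sum_prod_type_right, Finset.mul_sum, mul_assoc, mul_left_comm (u _)]
    _ = ∑ b, w b * wVar u (fun a => f a b) + (∑ a, u a) * wVar w g := by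
        simp only [sum_mul_sub_sq u_nonneg, mul_add, Finset.sum_add_distrib]
        rw [wVar, Finset.mul_sum]
        simp only [mul_left_comm (∑ a, u a), g]
    _ ≤ _ := by gcongr; exact sum_mul_wVar_wMean_le u_nonneg w_nonneg f

end WeightedVariance

/-! ### Single-variable resampling and the Poincaré inequality -/

section Resampling

variable {V : Type*} {S : V → Type*} [DecidableEq V] [∀ v, Fintype (S v)]

/-- Conditional mean of `f` given all variables except `v`, evaluated at the world `x`, under the
measure with weight `w`. -/
noncomputable def condMean (w : (∀ v, S v) → ℝ) (v : V) (f : (∀ v, S v) → ℝ) (x : ∀ v, S v) : ℝ :=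
  wMean (fun s => w (Function.update x v s)) fun s => f (Function.update x v s)

lemma condMean_update (w : (∀ v, S v) → ℝ) (v : V) (f : (∀ v, S v) → ℝ) (x : ∀ v, S v)
    (s : S v) : condMean w v f (Function.update x v s) = condMean w v f x := by
  simp [condMean]

variable [Fintype V]

/-- Expected variance of `f` when only the variable `v` is resampled: the term `E_π [Var_v f]` of
the Dirichlet form, not divided by the total weight. -/
noncomputable def siteVar (w : (∀ v, S v) → ℝ) (v : V) (f : (∀ v, S v) → ℝ) : ℝ :=
  ∑ x, w x * (f x - condMean w v f x) ^ 2

/-- Poincaré inequality with constant `c` for resampling single variables under the weight `w`,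
tested on the functions of the variables in `A`. Both sides are homogeneous in `w`, so the weight
need not be normalised. -/
def Poincare (w : (∀ v, S v) → ℝ) (A : Set V) (c : ℝ) : Prop :=
  ∀ f : (∀ v, S v) → ℝ, DependsOn f A → wVar w f ≤ c * ∑ v, siteVar w v f

lemma sum_sum_update (v : V) (F : (∀ v, S v) → ℝ) :
    ∑ x, ∑ s, F (Function.update x v s) = Fintype.card (S v) * ∑ x, F x := by
  have hinv : Function.Involutive
      fun p : (∀ v, S v) × S v => (Function.update p.1 v p.2, p.1 v) := by
    rintro ⟨x, s⟩
    simp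
  have h := Equiv.sum_comp hinv.toPerm fun p : (∀ v, S v) × S v => F p.1
  simpa [Fintype.sum_prod_type, Finset.mul_sum] using h

lemma card_mul_siteVar (w : (∀ v, S v) → ℝ) (v : V) (f : (∀ v, S v) → ℝ) :
    Fintype.card (S v) * siteVar w v f =
      ∑ x, wVar (fun s => w (Function.update x v s)) fun s => f (Function.update x v s) := by
  rw [siteVar, ← sum_sum_update]
  simp only [condMean_update]
  rfl

lemma siteVar_nonneg {w : (∀ v, S v) → ℝ} (w_nonneg : 0 ≤ w) (v : V) (f : (∀ v, S v) → ℝ) :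
    0 ≤ siteVar w v f :=
  Finset.sum_nonneg fun x _ => mul_nonneg (w_nonneg x) (sq_nonneg _)

lemma sum_siteVar_nonneg {w : (∀ v, S v) → ℝ} (w_nonneg : 0 ≤ w) (f : (∀ v, S v) → ℝ) :
    0 ≤ ∑ v, siteVar w v f :=
  Finset.sum_nonneg fun v _ => siteVar_nonneg w_nonneg v f

lemma Poincare.mono {w : (∀ v, S v) → ℝ} (w_nonneg : 0 ≤ w) {A : Set V} {c d : ℝ}
    (h : Poincare w A c) (hcd : c ≤ d) : Poincare w A d := fun f hf =>
  (h f hf).trans (mul_le_mul_of_nonneg_right hcd (sum_siteVar_nonneg w_nonneg f))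

lemma Poincare.mono_set {w : (∀ v, S v) → ℝ} {A B : Set V} {c : ℝ}
    (h : Poincare w B c) (hAB : A ⊆ B) : Poincare w A c := fun f hf =>
  h f (hf.mono hAB)

variable [∀ v, Nonempty (S v)]

lemma sum_mul_condMean_mul {w : (∀ v, S v) → ℝ} (w_nonneg : 0 ≤ w) {v : V}
    (f : (∀ v, S v) → ℝ) {g : (∀ v, S v) → ℝ} (hg : ∀ x s, g (Function.update x v s) = g x) :
    ∑ x, w x * (condMean w v f x * g x) = ∑ x, w x * (f x * g x) := by
  have hcard : (Fintype.card (S v) : ℝ) ≠ 0 := by exact_mod_cast Fintype.card_ne_zero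
  apply mul_left_cancel₀ hcard
  rw [← sum_sum_update, ← sum_sum_update]
  refine Finset.sum_congr rfl fun x _ => ?_
  simp only [hg, condMean_update, ← mul_assoc, ← Finset.sum_mul]
  rw [← wMean_mul_sum (fun s => w_nonneg (Function.update x v s)), mul_comm (wMean _ _)]
  rfl

lemma siteVar_eq_sub {w : (∀ v, S v) → ℝ} (w_nonneg : 0 ≤ w) (v : V) (f : (∀ v, S v) → ℝ) :
    siteVar w v f = ∑ x, w x * f x ^ 2 - ∑ x, w x * (f x * condMean w v f x) := by
  have orthogonal := sum_mul_condMean_mul w_nonneg f (condMean_update w v f)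
  calc siteVar w v f = ∑ x, w x * f x ^ 2 - 2 * ∑ x, w x * (f x * condMean w v f x) +
        ∑ x, w x * (condMean w v f x * condMean w v f x) := by
        rw [siteVar, Finset.mul_sum, ← Finset.sum_sub_distrib, ← Finset.sum_add_distrib]
        exact Finset.sum_congr rfl fun x _ => by ring
    _ = _ := by rw [orthogonal]; ring

lemma siteVar_le_mul_siteVar {w w' : (∀ v, S v) → ℝ} (w_nonneg : 0 ≤ w) {b : ℝ}
    (h : ∀ x, w x ≤ b * w' x) (v : V) (f : (∀ v, S v) → ℝ) :
    siteVar w v f ≤ b * siteVar w' v f := by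
  have hcard : (0 : ℝ) < Fintype.card (S v) := by exact_mod_cast Fintype.card_pos
  refine le_of_mul_le_mul_left ?_ hcard
  rw [mul_left_comm, card_mul_siteVar, card_mul_siteVar, Finset.mul_sum]
  exact Finset.sum_le_sum fun x _ =>
    wVar_le_mul_wVar (fun s => w_nonneg (Function.update x v s)) (fun s => h _) _

/-- Holley–Stroock perturbation. -/
lemma Poincare.perturb {w w' : (∀ v, S v) → ℝ} (w_nonneg : 0 ≤ w) (w'_nonneg : 0 ≤ w')
    {A : Set V} {a b c : ℝ} (hb : 0 ≤ b) (hc : 0 ≤ c) (hle : ∀ x, w x ≤ b * w' x)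
    (hge : ∀ x, w' x ≤ a * w x) (h : Poincare w' A c) : Poincare w A (a * b * c) := fun f hf =>
  calc wVar w f ≤ b * wVar w' f := wVar_le_mul_wVar w_nonneg hle f
    _ ≤ b * (c * ∑ v, a * siteVar w v f) := by
        gcongr
        refine (h f hf).trans ?_
        gcongr with v
        exact siteVar_le_mul_siteVar w'_nonneg hge v f
    _ = a * b * c * ∑ v, siteVar w v f := by rw [← Finset.mul_sum]; ring

end Resampling

/-! ### Tensorisation -/

section Tensorisation

variable {V : Type*} {S : V → Type*} [DecidableEq V]

lemma apply_piecewise_of_dependsOn {A : Finset V} {w : (∀ v, S v) → ℝ}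
    (h : DependsOn w (A : Set V)) (x z : ∀ v, S v) : w (A.piecewise x z) = w x :=
  h fun _ hv => A.piecewise_eq_of_mem _ _ hv

lemma apply_piecewise_of_dependsOn_compl {A : Finset V} {w : (∀ v, S v) → ℝ}
    (h : DependsOn w (A : Set V)ᶜ) (x z : ∀ v, S v) : w (A.piecewise x z) = w z :=
  h fun _ hv => A.piecewise_eq_of_notMem _ _ hv

variable [Fintype V] [∀ v, Fintype (S v)]

lemma sum_sum_piecewise (A : Finset V) (F : (∀ v, S v) → ℝ) :
    ∑ x, ∑ z, F (A.piecewise x z) = Fintype.card (∀ v, S v) * ∑ x, F x := by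
  have hinv : Function.Involutive
      fun p : (∀ v, S v) × (∀ v, S v) => (A.piecewise p.1 p.2, A.piecewise p.2 p.1) := by
    rintro ⟨x, z⟩
    ext v <;> by_cases hv : v ∈ A <;> simp [hv]
  have h := Equiv.sum_comp hinv.toPerm fun p : (∀ v, S v) × (∀ v, S v) => F p.1
  simpa [Fintype.sum_prod_type, Finset.mul_sum, -Fintype.card_pi] using h

variable {A : Finset V} {w₁ w₂ : (∀ v, S v) → ℝ}

lemma card_mul_wVar_mul_le (w₁_nonneg : 0 ≤ w₁) (w₂_nonneg : 0 ≤ w₂)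
    (h₁ : DependsOn w₁ (A : Set V)) (h₂ : DependsOn w₂ (A : Set V)ᶜ) (f : (∀ v, S v) → ℝ) :
    Fintype.card (∀ v, S v) * wVar (w₁ * w₂) f ≤
      ∑ z, w₂ z * wVar w₁ (fun x => f (A.piecewise x z)) +
        ∑ x, w₁ x * wVar w₂ (fun z => f (A.piecewise x z)) := by
  set u : (∀ v, S v) × (∀ v, S v) → ℝ := fun p => w₁ p.1 * w₂ p.2
  set m : ℝ := wMean u fun p => f (A.piecewise p.1 p.2)
  calc Fintype.card (∀ v, S v) * wVar (w₁ * w₂) f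
      ≤ Fintype.card (∀ v, S v) * ∑ x, (w₁ * w₂) x * (f x - m) ^ 2 := by
        gcongr
        exact wVar_le_sum_mul_sub_sq (mul_nonneg w₁_nonneg w₂_nonneg) f m
    _ = wVar u fun p => f (A.piecewise p.1 p.2) := by
        rw [← sum_sum_piecewise A]
        simp only [Pi.mul_apply, apply_piecewise_of_dependsOn h₁,
          apply_piecewise_of_dependsOn_compl h₂]
        rw [wVar, Fintype.sum_prod_type]
    _ ≤ _ := wVar_prod_le w₁_nonneg w₂_nonneg fun x z => f (A.piecewise x z)

variable [∀ v, Nonempty (S v)]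

lemma siteVar_eq_zero {w : (∀ v, S v) → ℝ} (w_nonneg : 0 ≤ w) {v : V} {f : (∀ v, S v) → ℝ}
    (hf : ∀ x s, f (Function.update x v s) = f x) : siteVar w v f = 0 := by
  have hcard : (Fintype.card (S v) : ℝ) ≠ 0 := by exact_mod_cast Fintype.card_ne_zero
  apply mul_left_cancel₀ hcard
  rw [card_mul_siteVar, mul_zero]
  simp only [hf]
  exact Finset.sum_eq_zero fun x _ => wVar_const (fun s => w_nonneg (Function.update x v s)) _

lemma sum_mul_siteVar_piecewise_of_mem (h₁ : DependsOn w₁ (A : Set V))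
    (h₂ : DependsOn w₂ (A : Set V)ᶜ) {v : V} (hv : v ∈ A) (f : (∀ v, S v) → ℝ) :
    ∑ z, w₂ z * siteVar w₁ v (fun x => f (A.piecewise x z)) =
      Fintype.card (∀ v, S v) * siteVar (w₁ * w₂) v f := by
  have hcard : (Fintype.card (S v) : ℝ) ≠ 0 := by exact_mod_cast Fintype.card_ne_zero
  have fiber (x z : ∀ v, S v) :
      wVar (fun s => (w₁ * w₂) (Function.update (A.piecewise x z) v s))
        (fun s => f (Function.update (A.piecewise x z) v s)) =
      w₂ z * wVar (fun s => w₁ (Function.update x v s))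
        (fun s => f (A.piecewise (Function.update x v s) z)) := by
    simp only [← wVar_const_mul, A.update_piecewise_of_mem x z hv, Pi.mul_apply,
      apply_piecewise_of_dependsOn h₁, apply_piecewise_of_dependsOn_compl h₂, mul_comm]
  apply mul_left_cancel₀ hcard
  rw [mul_left_comm, card_mul_siteVar, ← sum_sum_piecewise A, Finset.sum_comm, Finset.mul_sum]
  refine Finset.sum_congr rfl fun z _ => ?_
  rw [mul_left_comm, card_mul_siteVar, Finset.mul_sum]
  exact Finset.sum_congr rfl fun x _ => (fiber x z).symm

lemma sum_mul_sum_siteVar_piecewise (w₁_nonneg : 0 ≤ w₁) (h₁ : DependsOn w₁ (A : Set V))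
    (h₂ : DependsOn w₂ (A : Set V)ᶜ) (f : (∀ v, S v) → ℝ) :
    ∑ z, w₂ z * ∑ v, siteVar w₁ v (fun x => f (A.piecewise x z)) =
      Fintype.card (∀ v, S v) * ∑ v ∈ A, siteVar (w₁ * w₂) v f := by
  have outside (z : ∀ v, S v) (v : V) (hv : v ∉ A) :
      siteVar w₁ v (fun x => f (A.piecewise x z)) = 0 :=
    siteVar_eq_zero w₁_nonneg fun x s => congrArg f <|
      A.piecewise_congr (fun u hu => Function.update_of_ne (ne_of_mem_of_not_mem hu hv) _ _)
        fun _ _ => rfl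
  have restrict (z : ∀ v, S v) : ∑ v, siteVar w₁ v (fun x => f (A.piecewise x z)) =
      ∑ v ∈ A, siteVar w₁ v (fun x => f (A.piecewise x z)) :=
    (Finset.sum_subset A.subset_univ fun v _ hv => outside z v hv).symm
  simp only [restrict, Finset.mul_sum]
  rw [Finset.sum_comm]
  exact Finset.sum_congr rfl fun v hv => sum_mul_siteVar_piecewise_of_mem h₁ h₂ hv f

lemma Poincare.tensor {B : Set V} {c : ℝ} (w₁_nonneg : 0 ≤ w₁) (w₂_nonneg : 0 ≤ w₂)
    (h₁ : DependsOn w₁ (A : Set V)) (h₂ : DependsOn w₂ (A : Set V)ᶜ)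
    (p₁ : Poincare w₁ (A : Set V) c) (p₂ : Poincare w₂ B c) :
    Poincare (w₁ * w₂) (A ∪ B) c := by
  intro f hf
  have sectionA (z : ∀ v, S v) : DependsOn (fun x => f (A.piecewise x z)) (A : Set V) :=
    fun x y hxy => congrArg f (A.piecewise_congr hxy fun _ _ => rfl)
  have sectionB (x : ∀ v, S v) : DependsOn (fun z => f (A.piecewise x z)) B := by
    intro y z hyz
    refine hf fun u hu => ?_
    by_cases huA : u ∈ A
    · simp [huA]
    · simpa [huA] using hyz u (hu.resolve_left huA)
  have hcard : (0 : ℝ) < Fintype.card (∀ v, S v) := by exact_mod_cast Fintype.card_pos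
  refine le_of_mul_le_mul_left ?_ hcard
  calc Fintype.card (∀ v, S v) * wVar (w₁ * w₂) f
      ≤ ∑ z, w₂ z * wVar w₁ (fun x => f (A.piecewise x z)) +
        ∑ x, w₁ x * wVar w₂ (fun z => f (A.piecewise x z)) :=
        card_mul_wVar_mul_le w₁_nonneg w₂_nonneg h₁ h₂ f
    _ ≤ ∑ z, w₂ z * (c * ∑ v, siteVar w₁ v (fun x => f (A.piecewise x z))) +
        ∑ x, w₁ x * (c * ∑ v, siteVar w₂ v (fun z => f (A.piecewise x z))) := by
        gcongr with z _ x _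
        · exact w₂_nonneg z
        · exact p₁ _ (sectionA z)
        · exact w₁_nonneg x
        · exact p₂ _ (sectionB x)
    _ = c * (Fintype.card (∀ v, S v) * ∑ v ∈ A, siteVar (w₁ * w₂) v f +
        Fintype.card (∀ v, S v) * ∑ v ∈ Aᶜ, siteVar (w₁ * w₂) v f) := by
        have outer := sum_mul_sum_siteVar_piecewise (A := Aᶜ) w₂_nonneg
          (by simpa using h₂) (by simpa using h₁) f
        simp only [Finset.piecewise_compl, mul_comm w₂ w₁] at outer
        simp only [mul_left_comm _ c, ← Finset.mul_sum]
        rw [sum_mul_sum_siteVar_piecewise w₁_nonneg h₁ h₂, outer, mul_add]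
    _ = _ := by rw [← mul_add, Finset.sum_add_sum_compl, mul_left_comm]

lemma poincare_singleton {w : (∀ v, S v) → ℝ} (w_nonneg : 0 ≤ w) {a : V}
    (hdep : DependsOn w {a}) : Poincare w {a} 1 := by
  intro f hf
  obtain ⟨x₀⟩ : Nonempty (∀ v, S v) := inferInstance
  have condMean_const (x : ∀ v, S v) : condMean w a f x = condMean w a f x₀ := by
    have agree (s : S a) : ∀ v ∈ ({a} : Set V),
        Function.update x a s v = Function.update x₀ a s v := by
      rintro v rfl
      simp
    simp only [condMean, hdep (agree _), hf (agree _)]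
  calc wVar w f ≤ ∑ x, w x * (f x - condMean w a f x₀) ^ 2 :=
        wVar_le_sum_mul_sub_sq w_nonneg f _
    _ = siteVar w a f := by simp only [siteVar, condMean_const]
    _ ≤ ∑ v, siteVar w v f :=
        Finset.single_le_sum (fun v _ => siteVar_nonneg w_nonneg v f) (Finset.mem_univ a)
    _ = 1 * ∑ v, siteVar w v f := (one_mul _).symm

/-- Efron–Stein inequality. -/
lemma poincare_prod {u : ∀ v, S v → ℝ} (u_nonneg : ∀ v s, 0 ≤ u v s) (A : Finset V) :
    Poincare (fun x => ∏ v ∈ A, u v (x v)) (A : Set V) 1 := by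
  induction A using Finset.induction_on with
  | empty =>
    intro f hf
    rw [Finset.coe_empty] at hf
    obtain ⟨x₀⟩ : Nonempty (∀ v, S v) := inferInstance
    have f_const : f = fun _ => f x₀ := funext fun x => hf.empty x x₀
    rw [f_const, wVar_const (fun x => by simp), one_mul]
    exact sum_siteVar_nonneg (fun x => by simp) _
  | insert a A ha ih =>
    have dependsOn_A : DependsOn (fun x => ∏ v ∈ A, u v (x v)) (A : Set V) :=
      fun x y hxy => Finset.prod_congr rfl fun v hv => by rw [hxy v hv]
    have dependsOn_a : DependsOn (fun x => u a (x a)) {a} :=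
      fun x y hxy => congrArg (u a) (hxy a rfl)
    have h := Poincare.tensor (fun x => Finset.prod_nonneg fun v _ => u_nonneg v (x v))
      (fun x => u_nonneg a (x a)) dependsOn_A (dependsOn_a.mono (by simpa using ha)) ih
      (poincare_singleton (fun x => u_nonneg a (x a)) dependsOn_a)
    convert h using 1
    · ext x
      rw [Finset.prod_insert ha, mul_comm, Pi.mul_apply]
    · rw [Finset.coe_insert, Set.union_singleton]

end Tensorisation

/-! ### Hierarchy width -/

open Classical in
/-- The connected component of the hyperedge `e` in the hypergraph `E`, as a set of hyperedges. -/
noncomputable def edgeComponent {α ι : Type*} (dep : ι → Finset α) (E : Finset ι) (e : ι) :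
    Finset ι :=
  E.filter fun f => EdgeConn dep E e f

/-- `X` is a union of connected components of the hypergraph `E`: no hyperedge of `E` outside `X`
meets one in `X`. -/
structure IsUnionOfComponents {α ι : Type*} (dep : ι → Finset α) (E X : Finset ι) : Prop where
  subset : X ⊆ E
  mem_of_overlap : ∀ ⦃a b v⦄, a ∈ X → b ∈ E → v ∈ dep a → v ∈ dep b → b ∈ X

section HierarchyWidth

variable {α ι : Type*} (dep : ι → Finset α) {E X : Finset ι} {e : ι}

lemma mem_edgeComponent {f : ι} : f ∈ edgeComponent dep E e ↔ f ∈ E ∧ EdgeConn dep E e f := by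
  classical
  exact Finset.mem_filter

lemma mem_edgeComponent_self (he : e ∈ E) : e ∈ edgeComponent dep E e :=
  (mem_edgeComponent dep).2 ⟨he, Relation.ReflTransGen.refl⟩

lemma isUnionOfComponents_edgeComponent :
    IsUnionOfComponents dep E (edgeComponent dep E e) where
  subset _ hf := ((mem_edgeComponent dep).1 hf).1
  mem_of_overlap a b v ha hb hva hvb := by
    obtain ⟨haE, hea⟩ := (mem_edgeComponent dep).1 ha
    exact (mem_edgeComponent dep).2 ⟨hb, hea.tail ⟨haE, hb, v, hva, hvb⟩⟩

variable {dep}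

lemma IsUnionOfComponents.edgeComponent_eq (hX : IsUnionOfComponents dep E X) (he : e ∈ X) :
    edgeComponent dep X e = edgeComponent dep E e := by
  ext f
  simp only [mem_edgeComponent]
  constructor
  · rintro ⟨hf, hef⟩
    exact ⟨hX.subset hf,
      Relation.ReflTransGen.mono (fun a b h => ⟨hX.subset h.1, hX.subset h.2.1, h.2.2⟩) _ _ hef⟩
  · rintro ⟨-, hef⟩
    induction hef with
    | refl => exact ⟨he, Relation.ReflTransGen.refl⟩
    | tail _ hbc ih =>
      obtain ⟨-, hc, v, hvb, hvc⟩ := hbc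
      have hcX := hX.mem_of_overlap ih.1 hc hvb hvc
      exact ⟨hcX, ih.2.tail ⟨ih.1, hcX, v, hvb, hvc⟩⟩

variable [DecidableEq ι]

lemma IsUnionOfComponents.sdiff (hX : IsUnionOfComponents dep E X) :
    IsUnionOfComponents dep E (E \ X) where
  subset := Finset.sdiff_subset
  mem_of_overlap a b v ha hb hva hvb := by
    rw [Finset.mem_sdiff] at ha ⊢
    exact ⟨hb, fun hbX => ha.2 (hX.mem_of_overlap hbX ha.1 hvb hva)⟩

lemma IsUnionOfComponents.disjoint_biUnion [DecidableEq α] (hX : IsUnionOfComponents dep E X) :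
    Disjoint ((E \ X).biUnion dep) (X.biUnion dep) := by
  simp only [Finset.disjoint_left, Finset.mem_biUnion, not_exists, not_and]
  rintro v ⟨b, hb, hvb⟩ a ha hva
  rw [Finset.mem_sdiff] at hb
  exact hb.2 (hX.mem_of_overlap ha hb.1 hva hvb)

variable (dep)

lemma hw_empty : hw dep (∅ : Finset ι) = 0 := by
  rw [hw, Finset.sup_empty, bot_eq_zero]

lemma hw_eq_sup (E : Finset ι) :
    hw dep E = E.sup fun e => 1 + ((edgeComponent dep E e).attach.inf fun f =>
      (hw dep ((edgeComponent dep E e).erase f.1) : ℕ∞)).toNat := by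
  rw [hw]
  rfl

lemma exists_one_add_hw_erase_le (he : e ∈ E) :
    ∃ f ∈ edgeComponent dep E e, 1 + hw dep ((edgeComponent dep E e).erase f) ≤ hw dep E := by
  obtain ⟨f, -, hf⟩ := Finset.exists_mem_eq_inf (edgeComponent dep E e).attach
    ⟨⟨e, mem_edgeComponent_self dep he⟩, Finset.mem_attach _ _⟩
    fun f => (hw dep ((edgeComponent dep E e).erase f.1) : ℕ∞)
  have hsup := Finset.le_sup (f := fun e => 1 + ((edgeComponent dep E e).attach.inf fun f =>
    (hw dep ((edgeComponent dep E e).erase f.1) : ℕ∞)).toNat) he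
  rw [← hw_eq_sup, hf, ENat.toNat_natCast] at hsup
  exact ⟨f.1, f.2, hsup⟩

variable {dep}

lemma IsUnionOfComponents.hw_le (hX : IsUnionOfComponents dep E X) : hw dep X ≤ hw dep E := by
  rw [hw_eq_sup dep X, hw_eq_sup dep E]
  refine Finset.sup_le fun e he => ?_
  rw [hX.edgeComponent_eq he]
  exact Finset.le_sup (f := fun e => 1 + ((edgeComponent dep E e).attach.inf fun f =>
    (hw dep ((edgeComponent dep E e).erase f.1) : ℕ∞)).toNat) (hX.subset he)

end HierarchyWidth

/-! ### Poincaré inequality for factor graphs -/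

section FactorGraph

variable {V ι : Type*} {S : V → Type*} [DecidableEq V]

lemma nonneg_of_sub_le {Ω : Type*} [Nonempty Ω] {φ : Ω → ℝ} {M : ℝ}
    (hM : ∀ x y, φ x - φ y ≤ M) : 0 ≤ M := by
  obtain ⟨x⟩ := ‹Nonempty Ω›
  simpa using hM x x

lemma natCast_mul_nonneg_of_sub_le {Ω : Type*} [Nonempty Ω] {φ : ι → Ω → ℝ} {M : ℝ}
    (hM : ∀ j x y, φ j x - φ j y ≤ M) {k : ℕ} (hk : IsEmpty ι → k = 0) : 0 ≤ k * M := by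
  rcases isEmpty_or_nonempty ι with hι | ⟨⟨j⟩⟩
  · simp [hk hι]
  · exact mul_nonneg k.cast_nonneg (nonneg_of_sub_le (hM j))

lemma dependsOn_exp_sum {dep : ι → Finset V} {φ : ι → (∀ v, S v) → ℝ}
    (hloc : ∀ j, DependsOn (φ j) (dep j : Set V)) (E : Finset ι) :
    DependsOn (fun x => Real.exp (∑ j ∈ E, φ j x)) (E.biUnion dep : Set V) :=
  fun _ _ hxy => congrArg Real.exp <| Finset.sum_congr rfl fun j hj =>
    hloc j fun v hv => hxy v (Finset.mem_biUnion.2 ⟨j, hj, hv⟩)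

variable [Fintype V] [∀ v, Fintype (S v)] [∀ v, Nonempty (S v)]

lemma Poincare.exp_add {ε φ : (∀ v, S v) → ℝ} {M c : ℝ} {A : Set V} (hc : 0 ≤ c)
    (hM : ∀ x y, φ x - φ y ≤ M) (h : Poincare (fun x => Real.exp (ε x)) A c) :
    Poincare (fun x => Real.exp (φ x + ε x)) A (Real.exp M * c) := by
  obtain ⟨y, hy⟩ := Finite.exists_min φ
  have hle (x : ∀ v, S v) : Real.exp (φ x + ε x) ≤ Real.exp (φ y + M) * Real.exp (ε x) := by
    rw [← Real.exp_add, Real.exp_le_exp]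
    linarith [hM x y]
  have hge (x : ∀ v, S v) : Real.exp (ε x) ≤ Real.exp (-φ y) * Real.exp (φ x + ε x) := by
    rw [← Real.exp_add, Real.exp_le_exp]
    linarith [hy x]
  have perturbed := h.perturb (fun x => (Real.exp_pos _).le) (fun x => (Real.exp_pos _).le)
    (Real.exp_pos _).le hc hle hge
  rwa [← Real.exp_add, neg_add_cancel_left] at perturbed

lemma Poincare.exp_sum_of_erase [DecidableEq ι] {φ : ι → (∀ v, S v) → ℝ} {E : Finset ι} {f : ι}
    (hf : f ∈ E) {M c : ℝ} {A : Set V} (hc : 0 ≤ c) (hM : ∀ x y, φ f x - φ f y ≤ M)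
    (h : Poincare (fun x => Real.exp (∑ j ∈ E.erase f, φ j x)) A c) :
    Poincare (fun x => Real.exp (∑ j ∈ E, φ j x)) A (Real.exp M * c) := by
  have split (x : ∀ v, S v) : φ f x + ∑ j ∈ E.erase f, φ j x = ∑ j ∈ E, φ j x :=
    Finset.add_sum_erase E (fun j => φ j x) hf
  simpa only [split] using h.exp_add hc hM

variable [DecidableEq ι] {dep : ι → Finset V} {φ : ι → (∀ v, S v) → ℝ}

lemma IsUnionOfComponents.poincare {E X : Finset ι} (hX : IsUnionOfComponents dep E X)
    (hloc : ∀ j, DependsOn (φ j) (dep j : Set V)) {c : ℝ}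
    (p₁ : Poincare (fun x => Real.exp (∑ j ∈ X, φ j x)) Set.univ c)
    (p₂ : Poincare (fun x => Real.exp (∑ j ∈ E \ X, φ j x)) Set.univ c) :
    Poincare (fun x => Real.exp (∑ j ∈ E, φ j x)) Set.univ c := by
  have disjoint : ((E \ X).biUnion dep : Set V) ⊆ (X.biUnion dep : Set V)ᶜ :=
    Set.subset_compl_iff_disjoint_right.2 (Finset.disjoint_coe.2 hX.disjoint_biUnion)
  have product := Poincare.tensor (fun x => (Real.exp_pos _).le) (fun x => (Real.exp_pos _).le)
    (dependsOn_exp_sum hloc X) ((dependsOn_exp_sum hloc (E \ X)).mono disjoint)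
    (p₁.mono_set (Set.subset_univ _)) p₂
  convert product using 1
  · ext x
    rw [Pi.mul_apply, ← Real.exp_add, add_comm, Finset.sum_sdiff hX.subset]
  · rw [Set.union_univ]

theorem poincare_exp_hw (hloc : ∀ j, DependsOn (φ j) (dep j : Set V)) {M : ℝ}
    (hM : ∀ j x y, φ j x - φ j y ≤ M) (E : Finset ι) :
    Poincare (fun x => Real.exp (∑ j ∈ E, φ j x)) Set.univ (Real.exp (hw dep E * M)) := by
  induction E using Finset.strongInduction with
  | H E ih =>
  rcases E.eq_empty_or_nonempty with rfl | ⟨e, he⟩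
  · simpa [hw_empty] using
      poincare_prod (S := S) (u := fun _ _ => 1) (fun _ _ => zero_le_one) Finset.univ
  have M_nonneg : 0 ≤ M := nonneg_of_sub_le (hM e)
  have weaken {X : Finset ι} {k : ℝ} (hk : k ≤ hw dep E)
      (h : Poincare (fun x => Real.exp (∑ j ∈ X, φ j x)) Set.univ (Real.exp (k * M))) :
      Poincare (fun x => Real.exp (∑ j ∈ X, φ j x)) Set.univ (Real.exp (hw dep E * M)) :=
    h.mono (fun x => (Real.exp_pos _).le) (by gcongr)
  have component := isUnionOfComponents_edgeComponent dep (E := E) (e := e)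
  by_cases connected : edgeComponent dep E e = E
  · obtain ⟨f, hf, hle⟩ := exists_one_add_hw_erase_le dep he
    rw [connected] at hf hle
    refine weaken (k := 1 + hw dep (E.erase f)) (by exact_mod_cast hle) ?_
    rw [add_mul, one_mul, Real.exp_add]
    exact (ih _ (Finset.erase_ssubset hf)).exp_sum_of_erase hf (Real.exp_pos _).le (hM f)
  · have nonempty : (edgeComponent dep E e).Nonempty := ⟨e, mem_edgeComponent_self dep he⟩
    exact component.poincare hloc
      (weaken (by exact_mod_cast component.hw_le)
        (ih _ (component.subset.ssubset_of_ne connected)))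
      (weaken (by exact_mod_cast component.sdiff.hw_le)
        (ih _ (Finset.sdiff_ssubset component.subset nonempty)))

end FactorGraph

/-! ### Mixing from a spectral gap -/

section Mixing

variable {Ω : Type*} [Fintype Ω] [DecidableEq Ω]

/-- The form `(f, g) ↦ ⟨f, P g⟩` of `L²(μ)`. -/
noncomputable def transitionForm (P : Matrix Ω Ω ℝ) (μ : Ω → ℝ) : LinearMap.BilinForm ℝ (Ω → ℝ) :=
  Matrix.toBilin' (Matrix.diagonal μ * P)

/-- `P` has unit row sums, is reversible with respect to `μ`, positive semidefinite on `L²(μ)`, and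
has spectral gap at least `γ`. Nonnegativity of the entries of `P` is not part of the notion. -/
structure HasPosSemidefGap (P : Matrix Ω Ω ℝ) (μ : Ω → ℝ) (γ : ℝ) : Prop where
  mulVec_one : P.mulVec 1 = 1
  posSemidef : (transitionForm P μ).IsPosSemidef
  gap : ∀ f, ∑ x, μ x * f x = 0 → transitionForm P μ f f ≤ (1 - γ) * ∑ x, μ x * f x ^ 2

variable {P : Matrix Ω Ω ℝ} {μ : Ω → ℝ} {γ : ℝ}

lemma transitionForm_apply (P : Matrix Ω Ω ℝ) (μ f g : Ω → ℝ) :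
    transitionForm P μ f g = ∑ x, μ x * (f x * P.mulVec g x) := by
  rw [transitionForm, Matrix.toBilin'_apply', ← Matrix.mulVec_mulVec]
  simp only [dotProduct, Matrix.mulVec_diagonal, mul_left_comm]

namespace HasPosSemidefGap

lemma sum_mul_mulVec (h : HasPosSemidefGap P μ γ) (f : Ω → ℝ) :
    ∑ x, μ x * P.mulVec f x = ∑ x, μ x * f x :=
  calc ∑ x, μ x * P.mulVec f x = transitionForm P μ 1 f := by simp [transitionForm_apply]
    _ = transitionForm P μ f 1 := h.posSemidef.isSymm.eq 1 f
    _ = ∑ x, μ x * f x := by simp [transitionForm_apply, h.mulVec_one]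

lemma mulVec_contraction (h : HasPosSemidefGap P μ γ) (μ_nonneg : 0 ≤ μ) {f : Ω → ℝ}
    (hf : ∑ x, μ x * f x = 0) :
    ∑ x, μ x * P.mulVec f x ^ 2 ≤ (1 - γ) ^ 2 * ∑ x, μ x * f x ^ 2 := by
  set g := P.mulVec f
  have norm_nonneg (k : Ω → ℝ) : 0 ≤ ∑ x, μ x * k x ^ 2 :=
    Finset.sum_nonneg fun x _ => mul_nonneg (μ_nonneg x) (sq_nonneg _)
  have norm_g : transitionForm P μ g f = ∑ x, μ x * g x ^ 2 := by
    simp only [transitionForm_apply, sq, g]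
  have mean_g : ∑ x, μ x * g x = 0 := (h.sum_mul_mulVec f).trans hf
  have cauchy_schwarz : (∑ x, μ x * g x ^ 2) * ∑ x, μ x * g x ^ 2 ≤
      (∑ x, μ x * g x ^ 2) * ((1 - γ) ^ 2 * ∑ x, μ x * f x ^ 2) :=
    calc (∑ x, μ x * g x ^ 2) * ∑ x, μ x * g x ^ 2 = transitionForm P μ g f ^ 2 := by
          rw [norm_g, sq]
      _ ≤ transitionForm P μ g g * transitionForm P μ f f :=
          LinearMap.BilinForm.apply_sq_le_of_symm _ h.posSemidef.nonneg
            (LinearMap.BilinForm.isSymm_iff.1 h.posSemidef.isSymm) g f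
      _ ≤ ((1 - γ) * ∑ x, μ x * g x ^ 2) * ((1 - γ) * ∑ x, μ x * f x ^ 2) :=
          mul_le_mul (h.gap g mean_g) (h.gap f hf) (h.posSemidef.nonneg f)
            ((h.posSemidef.nonneg g).trans (h.gap g mean_g))
      _ = _ := by ring
  rcases (norm_nonneg g).eq_or_lt with norm_zero | norm_pos
  · rw [← norm_zero]
    exact mul_nonneg (sq_nonneg _) (norm_nonneg f)
  · exact le_of_mul_le_mul_left cauchy_schwarz norm_pos

lemma sum_mul_pow_mulVec (h : HasPosSemidefGap P μ γ) (f : Ω → ℝ) (t : ℕ) :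
    ∑ x, μ x * (P ^ t).mulVec f x = ∑ x, μ x * f x := by
  induction t with
  | zero => rw [pow_zero, Matrix.one_mulVec]
  | succ t ih => rw [pow_succ', ← Matrix.mulVec_mulVec, h.sum_mul_mulVec, ih]

lemma pow_mulVec_contraction (h : HasPosSemidefGap P μ γ) (μ_nonneg : 0 ≤ μ) {f : Ω → ℝ}
    (hf : ∑ x, μ x * f x = 0) (t : ℕ) :
    ∑ x, μ x * (P ^ t).mulVec f x ^ 2 ≤ ((1 - γ) ^ 2) ^ t * ∑ x, μ x * f x ^ 2 := by
  induction t with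
  | zero => rw [pow_zero, pow_zero, Matrix.one_mulVec, one_mul]
  | succ t ih =>
    rw [pow_succ' P, ← Matrix.mulVec_mulVec, pow_succ', mul_assoc]
    exact (h.mulVec_contraction μ_nonneg ((h.sum_mul_pow_mulVec f t).trans hf)).trans
      (mul_le_mul_of_nonneg_left ih (sq_nonneg _))

lemma pow_mulVec_one (h : HasPosSemidefGap P μ γ) (t : ℕ) : (P ^ t).mulVec 1 = 1 := by
  induction t with
  | zero => rw [pow_zero, Matrix.one_mulVec]
  | succ t ih => rw [pow_succ, ← Matrix.mulVec_mulVec, h.mulVec_one, ih]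

end HasPosSemidefGap

/-- The indicator function of `A`, centred so as to have mean zero under `μ`. -/
noncomputable def centredIndicator (μ : Ω → ℝ) (A : Finset Ω) (y : Ω) : ℝ :=
  (if y ∈ A then 1 else 0) - ∑ z ∈ A, μ z

lemma sum_mul_centredIndicator (hμ : ∑ x, μ x = 1) (A : Finset Ω) :
    ∑ x, μ x * centredIndicator μ A x = 0 := by
  simp [centredIndicator, mul_sub, Finset.sum_sub_distrib, ← Finset.sum_mul, hμ]

lemma sum_mul_centredIndicator_sq_le (hμ : ∑ x, μ x = 1) (A : Finset Ω) :
    ∑ x, μ x * centredIndicator μ A x ^ 2 ≤ 1 / 4 := by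
  set p := ∑ z ∈ A, μ z
  calc ∑ x, μ x * centredIndicator μ A x ^ 2
      = ∑ x, ((1 - 2 * p) * (if x ∈ A then μ x else 0) + p ^ 2 * μ x) := by
        refine Finset.sum_congr rfl fun x _ => ?_
        rw [centredIndicator]
        split_ifs <;> ring
    _ = 1 / 4 - (p - 1 / 2) ^ 2 := by
        rw [Finset.sum_add_distrib, ← Finset.mul_sum, ← Finset.mul_sum, hμ,
          Finset.sum_ite_mem, Finset.univ_inter]
        ring
    _ ≤ 1 / 4 := sub_le_self _ (sq_nonneg _)

namespace HasPosSemidefGap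

lemma pow_mulVec_centredIndicator (h : HasPosSemidefGap P μ γ) (A : Finset Ω) (t : ℕ) (x : Ω) :
    (P ^ t).mulVec (centredIndicator μ A) x = ∑ y ∈ A, ((P ^ t) x y - μ y) := by
  have row_sum : ∑ y, (P ^ t) x y = 1 := by
    simpa [Matrix.mulVec, dotProduct] using congrFun (h.pow_mulVec_one t) x
  simp [Matrix.mulVec, dotProduct, centredIndicator, mul_sub, Finset.sum_sub_distrib,
    ← Finset.sum_mul, row_sum]

lemma mul_sq_sum_sub_le (h : HasPosSemidefGap P μ γ) (μ_nonneg : 0 ≤ μ) (hμ : ∑ x, μ x = 1)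
    (A : Finset Ω) (t : ℕ) (x : Ω) :
    μ x * (∑ y ∈ A, ((P ^ t) x y - μ y)) ^ 2 ≤ ((1 - γ) ^ 2) ^ t * (1 / 4) := by
  rw [← h.pow_mulVec_centredIndicator]
  calc μ x * (P ^ t).mulVec (centredIndicator μ A) x ^ 2
      ≤ ∑ y, μ y * (P ^ t).mulVec (centredIndicator μ A) y ^ 2 :=
        Finset.single_le_sum (fun y _ => mul_nonneg (μ_nonneg y) (sq_nonneg _))
          (Finset.mem_univ x)
    _ ≤ ((1 - γ) ^ 2) ^ t * ∑ y, μ y * centredIndicator μ A y ^ 2 :=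
        h.pow_mulVec_contraction μ_nonneg (sum_mul_centredIndicator hμ A) t
    _ ≤ ((1 - γ) ^ 2) ^ t * (1 / 4) := by
        gcongr
        exact sum_mul_centredIndicator_sq_le hμ A

theorem mixedAt (h : HasPosSemidefGap P μ γ) (hγ : γ ≤ 1) (hμ : ∑ x, μ x = 1) {L : ℝ}
    (hL : ∀ x, Real.exp (-L) ≤ μ x) {t : ℕ} (ht : Real.log 4 + L ≤ 2 * γ * t) :
    MixedAt P μ t := by
  intro x A
  have decay : ((1 - γ) ^ 2) ^ t ≤ Real.exp (-L) * (1 / 4) :=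
    calc ((1 - γ) ^ 2) ^ t ≤ (Real.exp (-γ) ^ 2) ^ t := by
          have := sub_nonneg.2 hγ
          gcongr
          exact Real.one_sub_le_exp_neg γ
      _ = Real.exp (-(2 * γ * t)) := by
          rw [← pow_mul, ← Real.exp_nat_mul]
          push_cast
          ring_nf
      _ ≤ Real.exp (-L + -Real.log 4) := by gcongr; linarith
      _ = Real.exp (-L) * (1 / 4) := by
          rw [Real.exp_add, Real.exp_neg (Real.log 4), Real.exp_log four_pos, one_div]
  have sq_le : (∑ y ∈ A, ((P ^ t) x y - μ y)) ^ 2 ≤ (1 / 4) ^ 2 := by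
    refine le_of_mul_le_mul_left ?_ (Real.exp_pos (-L))
    calc Real.exp (-L) * (∑ y ∈ A, ((P ^ t) x y - μ y)) ^ 2
        ≤ μ x * (∑ y ∈ A, ((P ^ t) x y - μ y)) ^ 2 := by gcongr; exact hL x
      _ ≤ ((1 - γ) ^ 2) ^ t * (1 / 4) :=
          h.mul_sq_sum_sub_le (fun y => (Real.exp_pos _).le.trans (hL y)) hμ A t x
      _ ≤ Real.exp (-L) * (1 / 4) * (1 / 4) := by gcongr
      _ = Real.exp (-L) * (1 / 4) ^ 2 := by ring
  exact abs_le_of_sq_le_sq sq_le (by norm_num)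

end HasPosSemidefGap

end Mixing

/-! ### Gibbs sampling -/

lemma sum_exp_pos {Ω : Type*} [Fintype Ω] [Nonempty Ω] (ε : Ω → ℝ) : 0 < ∑ x, Real.exp (ε x) :=
  Finset.sum_pos (fun _ _ => Real.exp_pos _) Finset.univ_nonempty

section Gibbs

variable {V S : Type*} [Fintype V] [DecidableEq V] [Fintype S] [DecidableEq S]

lemma sum_ite_agree_off (x : V → S) (v : V) (F : (V → S) → ℝ) :
    (∑ y, if ∀ u, u ≠ v → x u = y u then F y else 0) = ∑ s, F (Function.update x v s) := by
  rw [← Finset.sum_filter]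
  refine (Finset.sum_bij (fun s _ => Function.update x v s) ?_ ?_ ?_ fun _ _ => rfl).symm
  · intro s _
    simpa using fun u hu => (Function.update_of_ne hu s x).symm
  · intro s _ s' _ hss'
    exact Function.update_injective x v hss'
  · intro y hy
    exact ⟨y v, Finset.mem_univ _, Function.update_eq_iff.2
      ⟨rfl, fun u hu => (Finset.mem_filter.1 hy).2 u hu⟩⟩

variable [Nonempty S] (ε : (V → S) → ℝ)

lemma gibbsPi_nonneg : 0 ≤ gibbsPi ε := fun _ =>
  div_nonneg (Real.exp_pos _).le (sum_exp_pos ε).le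

lemma sum_gibbsPi : ∑ x, gibbsPi ε x = 1 := by
  simp only [gibbsPi, ← Finset.sum_div]
  exact div_self (sum_exp_pos ε).ne'

lemma exp_neg_le_gibbsPi {R : ℝ} (hR : ∀ x y, ε x - ε y ≤ R) (x : V → S) :
    Real.exp (-(Fintype.card V * Real.log (Fintype.card S) + R)) ≤ gibbsPi ε x := by
  have card_pos : (0 : ℝ) < Fintype.card S := by exact_mod_cast Fintype.card_pos
  rw [gibbsPi, le_div_iff₀ (sum_exp_pos ε)]
  calc Real.exp (-(Fintype.card V * Real.log (Fintype.card S) + R)) * ∑ y, Real.exp (ε y)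
      ≤ Real.exp (-(Fintype.card V * Real.log (Fintype.card S) + R)) *
        ∑ _y : V → S, Real.exp (ε x + R) := by
        gcongr with y
        linarith [hR y x]
    _ = Real.exp (-(Fintype.card V * Real.log (Fintype.card S) + R)) *
        (Real.exp (Fintype.card V * Real.log (Fintype.card S)) * Real.exp (ε x + R)) := by
        rw [Real.exp_nat_mul, Real.exp_log card_pos]
        simp
    _ = Real.exp (ε x) := by
        rw [← Real.exp_add, ← Real.exp_add]
        ring_nf

lemma Poincare.gibbsPi_of_exp {c : ℝ} (hc : 0 ≤ c) {A : Set V}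
    (h : Poincare (fun x => Real.exp (ε x)) A c) : Poincare (gibbsPi ε) A c := by
  have Z_pos := sum_exp_pos ε
  have normalised := h.perturb (gibbsPi_nonneg ε) (fun x => (Real.exp_pos _).le)
    (inv_nonneg.2 Z_pos.le) hc (fun x => (div_eq_inv_mul _ _).le)
    (fun x => (mul_div_cancel₀ _ Z_pos.ne').ge)
  rwa [mul_inv_cancel₀ Z_pos.ne', one_mul] at normalised

lemma condMean_gibbsPi (v : V) (f : (V → S) → ℝ) (x : V → S) :
    condMean (gibbsPi ε) v f x = condMean (fun y => Real.exp (ε y)) v f x := by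
  simp only [condMean, gibbsPi, div_eq_inv_mul]
  exact wMean_const_mul (inv_ne_zero (sum_exp_pos ε).ne') _ _

lemma gibbsP_mulVec (f : (V → S) → ℝ) (x : V → S) :
    (gibbsP ε).mulVec f x =
      (Fintype.card V : ℝ)⁻¹ * ∑ v, condMean (gibbsPi ε) v f x := by
  simp only [Matrix.mulVec, dotProduct, gibbsP, mul_assoc, ← Finset.mul_sum, Finset.sum_mul,
    ite_mul, zero_mul]
  rw [Finset.sum_comm]
  simp only [condMean_gibbsPi]
  congr! 2 with v
  rw [sum_ite_agree_off x v fun y =>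
    Real.exp (ε y) / (∑ s, Real.exp (ε (Function.update x v s))) * f y]
  simp only [condMean, wMean, Finset.sum_div, div_mul_eq_mul_div]

lemma transitionForm_gibbsP (f g : (V → S) → ℝ) :
    transitionForm (gibbsP ε) (gibbsPi ε) f g =
      (Fintype.card V : ℝ)⁻¹ * ∑ v, ∑ x, gibbsPi ε x * (f x * condMean (gibbsPi ε) v g x) := by
  simp only [transitionForm_apply, gibbsP_mulVec, mul_left_comm _ (Fintype.card V : ℝ)⁻¹,
    ← Finset.mul_sum]
  simp only [Finset.mul_sum]
  rw [Finset.sum_comm]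

-- `condMean (gibbsPi ε) v` is an orthogonal projection of `L²(π)`.
lemma transitionForm_gibbsP_eq_sum_condMean (f g : (V → S) → ℝ) :
    transitionForm (gibbsP ε) (gibbsPi ε) f g = (Fintype.card V : ℝ)⁻¹ *
      ∑ v, ∑ x, gibbsPi ε x * (condMean (gibbsPi ε) v f x * condMean (gibbsPi ε) v g x) := by
  simp only [transitionForm_gibbsP,
    sum_mul_condMean_mul (gibbsPi_nonneg ε) f (condMean_update (gibbsPi ε) _ g)]

lemma transitionForm_gibbsP_isPosSemidef :
    (transitionForm (gibbsP ε) (gibbsPi ε)).IsPosSemidef where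
  eq f g := by simp only [transitionForm_gibbsP_eq_sum_condMean, mul_comm (condMean _ _ f _)]
  nonneg f := by
    rw [transitionForm_gibbsP_eq_sum_condMean]
    exact mul_nonneg (by positivity) <| Finset.sum_nonneg fun v _ => Finset.sum_nonneg fun x _ =>
      mul_nonneg (gibbsPi_nonneg ε x) (mul_self_nonneg _)

variable [Nonempty V]

lemma transitionForm_gibbsP_self (f : (V → S) → ℝ) :
    transitionForm (gibbsP ε) (gibbsPi ε) f f = ∑ x, gibbsPi ε x * f x ^ 2 -
      (Fintype.card V : ℝ)⁻¹ * ∑ v, siteVar (gibbsPi ε) v f := by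
  have card_ne_zero : (Fintype.card V : ℝ) ≠ 0 := by exact_mod_cast Fintype.card_ne_zero
  simp only [transitionForm_gibbsP, siteVar_eq_sub (gibbsPi_nonneg ε), Finset.sum_sub_distrib,
    Finset.sum_const, Finset.card_univ, nsmul_eq_mul, mul_sub]
  rw [inv_mul_cancel_left₀ card_ne_zero, sub_sub_cancel]

lemma gibbsP_mulVec_one : (gibbsP ε).mulVec 1 = 1 := by
  have condMean_one (v : V) (x : V → S) : condMean (gibbsPi ε) v 1 x = 1 := by
    rw [condMean_gibbsPi]
    simp [condMean, wMean, (sum_exp_pos fun s => ε (Function.update x v s)).ne']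
  ext x
  simp [gibbsP_mulVec, condMean_one]

variable {ε}

theorem Poincare.hasPosSemidefGap {c : ℝ} (hc : 0 < c)
    (h : Poincare (gibbsPi ε) Set.univ c) :
    HasPosSemidefGap (gibbsP ε) (gibbsPi ε) (c * Fintype.card V)⁻¹ where
  mulVec_one := gibbsP_mulVec_one ε
  posSemidef := transitionForm_gibbsP_isPosSemidef ε
  gap f hf := by
    have variance : wVar (gibbsPi ε) f = ∑ x, gibbsPi ε x * f x ^ 2 := by
      simp [wVar, wMean, hf]
    have poincare : c⁻¹ * ∑ x, gibbsPi ε x * f x ^ 2 ≤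
        ∑ v, siteVar (gibbsPi ε) v f := by
      rw [inv_mul_le_iff₀ hc, ← variance]
      exact h f (dependsOn_univ f)
    rw [transitionForm_gibbsP_self, mul_inv_rev, sub_mul, one_mul, mul_assoc]
    gcongr

end Gibbs

lemma one_le_log_four_add_mul {n : ℕ} (hn : 0 < n) (s : ℕ) {R : ℝ} (hR : 0 ≤ R) :
    1 ≤ (Real.log 4 + n * Real.log s + R) * n := by
  have one_le_log_four : 1 ≤ Real.log 4 := by
    rw [Real.le_log_iff_exp_le four_pos]
    linarith [Real.exp_one_lt_three]
  have mul_log_nonneg : 0 ≤ n * Real.log s :=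
    mul_nonneg n.cast_nonneg (Real.log_natCast_nonneg s)
  have one_le_n : (1 : ℝ) ≤ n := by exact_mod_cast hn
  exact one_le_mul_of_one_le_of_one_le (by linarith) one_le_n

lemma exists_nat_le_and_le_two_mul {B : ℝ} (hB : 1 ≤ B) : ∃ t : ℕ, t ≤ B ∧ B ≤ 2 * t := by
  refine ⟨⌊B⌋₊, Nat.floor_le (zero_le_one.trans hB), ?_⟩
  linarith [Nat.div_two_lt_floor hB]

section FactorGraph

variable {V S ι : Type*} [Fintype V] [DecidableEq V] [Fintype S] [DecidableEq S] [Nonempty S]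
  [Fintype ι]

lemma exp_neg_le_gibbsPi_sum {φ : ι → (V → S) → ℝ} {M : ℝ} (hM : ∀ j x y, φ j x - φ j y ≤ M)
    {s : ℕ} (hs : Fintype.card S ≤ s) (x : V → S) :
    Real.exp (-(Fintype.card V * Real.log s + Fintype.card ι * M)) ≤
      gibbsPi (fun x => ∑ j, φ j x) x := by
  have energy_sub_le (x y : V → S) : ∑ j, φ j x - ∑ j, φ j y ≤ Fintype.card ι * M := by
    rw [← Finset.sum_sub_distrib, ← nsmul_eq_mul]
    exact Finset.sum_le_card_nsmul _ _ _ fun j _ => hM j x y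
  have card_pos : (0 : ℝ) < Fintype.card S := by exact_mod_cast Fintype.card_pos
  have log_card_le : Real.log (Fintype.card S) ≤ Real.log s :=
    Real.log_le_log card_pos (by exact_mod_cast hs)
  refine le_trans ?_ (exp_neg_le_gibbsPi _ energy_sub_le x)
  gcongr

variable [Nonempty V] [DecidableEq ι]

theorem stmt0_general (dep : ι → Finset V) (φ : ι → (V → S) → ℝ)
    (hloc : ∀ j (x y : V → S), (∀ v ∈ dep j, x v = y v) → φ j x = φ j y)
    (M : ℝ) (hM : ∀ j (x y : V → S), φ j x - φ j y ≤ M)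
    (s : ℕ) (hs : Fintype.card S ≤ s) (t : ℕ)
    (ht : (Real.log 4 + Fintype.card V * Real.log s + Fintype.card ι * M) *
      Fintype.card V * Real.exp (hw dep Finset.univ * M) ≤ 2 * t) :
    MixedAt (gibbsP fun x : V → S => ∑ j, φ j x) (gibbsPi fun x : V → S => ∑ j, φ j x) t := by
  have poincare : Poincare (gibbsPi fun x : V → S => ∑ j, φ j x) Set.univ
      (Real.exp (hw dep Finset.univ * M)) :=
    (poincare_exp_hw (fun j _ _ => hloc j _ _) hM Finset.univ).gibbsPi_of_exp _ (Real.exp_pos _).le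
  have gap := poincare.hasPosSemidefGap (Real.exp_pos _)
  have hw_mul_nonneg : 0 ≤ hw dep Finset.univ * M :=
    natCast_mul_nonneg_of_sub_le hM fun _ => by rw [Finset.univ_eq_empty, hw_empty]
  have one_le_card : (1 : ℝ) ≤ Fintype.card V := by exact_mod_cast Fintype.card_pos
  refine gap.mixedAt ?_ (sum_gibbsPi _) (exp_neg_le_gibbsPi_sum hM hs) ?_
  · exact inv_le_one_of_one_le₀
      (one_le_mul_of_one_le_of_one_le (Real.one_le_exp hw_mul_nonneg) one_le_card)
  · rw [mul_right_comm, ← div_eq_mul_inv, le_div_iff₀ (by positivity)]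
    linarith

end FactorGraph

/-- **Polynomial mixing time.**  If `G` is a factor graph with `n` variables, at most `s`
states per variable, `e` factors, maximum factor weight `M`, and hierarchy width `h`, then
the mixing time of Gibbs sampling on `G` is at most `(log 4 + n log s + e M) · n · exp(3hM)`
(i.e. there is a time `t` below this bound at which the chain is within total variation
distance `1/4` of the Gibbs distribution). -/
theorem stmt0 {V S ι : Type*} [Fintype V] [DecidableEq V] [Nonempty V]
    [Fintype S] [DecidableEq S] [Nonempty S] [Fintype ι] [DecidableEq ι]
    (dep : ι → Finset V) (φ : ι → (V → S) → ℝ)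
    (hloc : ∀ j (x y : V → S), (∀ v ∈ dep j, x v = y v) → φ j x = φ j y)
    (M : ℝ) (hM : ∀ j (x y : V → S), φ j x - φ j y ≤ M)
    (s : ℕ) (hs : Fintype.card S ≤ s) :
    ∃ t : ℕ,
      MixedAt (gibbsP fun x : V → S => ∑ j, φ j x) (gibbsPi fun x : V → S => ∑ j, φ j x) t ∧
      (t : ℝ) ≤ (Real.log 4 + Fintype.card V * Real.log s + Fintype.card ι * M) *
        Fintype.card V * Real.exp (3 * (hw dep Finset.univ : ℝ) * M) := by
  have hw_mul_nonneg : 0 ≤ hw dep Finset.univ * M :=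
    natCast_mul_nonneg_of_sub_le hM fun _ => by rw [Finset.univ_eq_empty, hw_empty]
  have card_mul_nonneg : 0 ≤ Fintype.card ι * M :=
    natCast_mul_nonneg_of_sub_le hM fun _ => Fintype.card_eq_zero
  have one_le_prefactor := one_le_log_four_add_mul (Fintype.card_pos (α := V)) s card_mul_nonneg
  obtain ⟨t, ht, hle⟩ := exists_nat_le_and_le_two_mul
    (one_le_mul_of_one_le_of_one_le one_le_prefactor (Real.one_le_exp hw_mul_nonneg))
  refine ⟨t, stmt0_general dep φ hloc M hM s hs t hle, ht.trans ?_⟩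
  exact mul_le_mul_of_nonneg_left (Real.exp_le_exp.2 (by linarith))
    (zero_le_one.trans one_le_prefactor)
end

section
/- Let G and Ḡ be two factor graphs on the same variables which differ only in that G contains one additional factor φ*, where max_I φ*(I) − min_I φ*(I) ≤ M. Then the transition matrices P and P̄ of Gibbs sampling on G and Ḡ satisfy, for all pairs of distinct worlds x ≠ y, exp(−M)·P̄(x,y) ≤ P(x,y) ≤ exp(M)·P̄(x,y). -/
/-!
A Gibbs update of the variable `v` compares only worlds that agree off `v`. Cross-multiplying
`exp (f a) / ∑ exp (f s) ≤ exp M * (exp (e a) / ∑ exp (e s))` reduces it to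
`f a + e s ≤ M + e a + f s` for each state `s` of `v`, so it is enough that `f - e` varies by at
most `M` when a single variable is changed. This condition is symmetric in `e` and `f`, so the upper
bound with the two energies exchanged gives the lower bound.
-/

open Function Real

theorem exp_div_sum_exp_le_exp_mul {α : Type*} {t : Finset α} {e f : α → ℝ} {M : ℝ} {a : α}
    (ha : a ∈ t) (h : ∀ s ∈ t, (f a - e a) - (f s - e s) ≤ M) :
    exp (f a) / ∑ s ∈ t, exp (f s) ≤ exp M * (exp (e a) / ∑ s ∈ t, exp (e s)) := by
  have sum_exp_pos (g : α → ℝ) : 0 < ∑ s ∈ t, exp (g s) :=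
    Finset.sum_pos (fun _ _ => exp_pos _) ⟨a, ha⟩
  rw [← mul_div_assoc, div_le_div_iff₀ (sum_exp_pos f) (sum_exp_pos e), Finset.mul_sum,
    Finset.mul_sum]
  refine Finset.sum_le_sum fun s hs => ?_
  simp only [← exp_add, exp_le_exp]
  linarith [h s hs]

section Gibbs

variable {V S : Type*} [Fintype V] [DecidableEq V] [Fintype S] [DecidableEq S] {M : ℝ}

theorem gibbsP_le_exp_mul_gibbsP {e f : (V → S) → ℝ}
    (h : ∀ x v s t, (f (update x v s) - e (update x v s)) -
      (f (update x v t) - e (update x v t)) ≤ M) (x y : V → S) :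
    gibbsP f x y ≤ exp M * gibbsP e x y := by
  simp only [gibbsP]
  rw [mul_left_comm, Finset.mul_sum _ _ (exp M)]
  gcongr with v
  split_ifs with agree_off_v
  · have y_eq : y = update x v (y v) :=
      eq_update_iff.2 ⟨rfl, fun u hu => (agree_off_v u hu).symm⟩
    rw [y_eq]
    exact exp_div_sum_exp_le_exp_mul (e := fun s => e (update x v s))
      (f := fun s => f (update x v s)) (Finset.mem_univ (y v)) fun s _ => h x v (y v) s
  · rw [mul_zero]

theorem stmt5_general {e δ : (V → S) → ℝ}
    (hδ : ∀ x v s t, δ (update x v s) - δ (update x v t) ≤ M) (x y : V → S) :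
    exp (-M) * gibbsP e x y ≤ gibbsP (fun z => e z + δ z) x y ∧
      gibbsP (fun z => e z + δ z) x y ≤ exp M * gibbsP e x y := by
  constructor
  · rw [exp_neg, inv_mul_le_iff₀ (exp_pos M)]
    exact gibbsP_le_exp_mul_gibbsP (fun x v s t => by linarith [hδ x v t s]) x y
  · exact gibbsP_le_exp_mul_gibbsP (fun x v s t => by linarith [hδ x v s t]) x y

end Gibbs

/-- Let `Ḡ` be a factor graph with factors `φ j`, and let `G` be the factor graph obtained
from `Ḡ` by adding one more factor `φstar` with `max φstar − min φstar ≤ M`.  Then the Gibbs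
sampling transition matrices `P` of `G` and `P̄` of `Ḡ` satisfy, for all distinct worlds
`x ≠ y`, `exp(−M)·P̄(x,y) ≤ P(x,y) ≤ exp(M)·P̄(x,y)`. -/
theorem stmt5 {V S ι : Type*} [Fintype V] [DecidableEq V] [Nonempty V]
    [Fintype S] [DecidableEq S] [Nonempty S] [Fintype ι]
    (φ : ι → (V → S) → ℝ) (φstar : (V → S) → ℝ)
    (M : ℝ) (hM : ∀ x y : V → S, φstar x - φstar y ≤ M) :
    ∀ x y : V → S, x ≠ y →
      Real.exp (-M) * gibbsP (fun z : V → S => ∑ j, φ j z) x y ≤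
        gibbsP (fun z : V → S => (∑ j, φ j z) + φstar z) x y ∧
      gibbsP (fun z : V → S => (∑ j, φ j z) + φstar z) x y ≤
        Real.exp M * gibbsP (fun z : V → S => ∑ j, φ j z) x y := by
  exact fun x y _ => stmt5_general (fun _ _ _ _ => hM _ _) x y
end

section
/- For every hypergraph G, the hypertree width of G is at most the hierarchy width of G: tw(G) ≤ hw(G). -/
/-- A hypertree decomposition of the hypergraph with hyperedges `E` (hyperedge `e` has
vertex set `dep e`): a tree decomposition `(T, ρ)` of the primal graph together with a
hyperedge labeling `χ` such that every vertex of every bag is covered by a hyperedge of the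
label of that bag, and the "special condition": for every node `u`, hyperedge `e ∈ χ u`,
and descendant `v` of `u`, one has `dep e ∩ ρ v ⊆ ρ u`  (a node `v` is a descendant of `u`
if `u` lies on the unique path from `v` to the root). -/
structure HypertreeDecomp {α ι : Type*} (dep : ι → Finset α) (E : Finset ι) where
  τ : Type
  fin : Fintype τ
  T : SimpleGraph τ
  tree : T.IsTree
  root : τ
  ρ : τ → Finset α
  χ : τ → Finset ι
  sub : ∀ v, χ v ⊆ E
  vertexCover : ∀ x : α, (∃ e ∈ E, x ∈ dep e) → ∃ v, x ∈ ρ v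
  primalEdgeCover : ∀ e ∈ E, ∀ x ∈ dep e, ∀ y ∈ dep e, ∃ v, x ∈ ρ v ∧ y ∈ ρ v
  vertexConn : ∀ x : α, ∀ u v : τ, x ∈ ρ u → x ∈ ρ v →
    ∀ p : T.Walk u v, p.IsPath → ∀ w ∈ p.support, x ∈ ρ w
  bagCover : ∀ u : τ, ∀ x ∈ ρ u, ∃ e ∈ χ u, x ∈ dep e
  special : ∀ u : τ, ∀ e ∈ χ u, ∀ v : τ,
    (∀ p : T.Walk v root, p.IsPath → u ∈ p.support) →
    ∀ x ∈ dep e, x ∈ ρ v → x ∈ ρ u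

/-- The width of a hypertree decomposition: the size of its largest hyperedge label. -/
noncomputable def HypertreeDecomp.width {α ι : Type*} {dep : ι → Finset α} {E : Finset ι}
    (D : HypertreeDecomp dep E) : ℕ :=
  letI := D.fin
  Finset.univ.sup fun v => (D.χ v).card

/-!
The recursion for `hw` builds a hypertree decomposition in which each bag is the *whole* vertex set
of its label. For such a decomposition bag covers and the special condition are automatic, for any
root, and what remains is a tree labelled by hyperedges in which the nodes meeting a given vertex
are connected. Putting a removed hyperedge `f` back into every label costs one unit of width and
keeps this property, because the vertices of `f` then meet every node. Vertex-disjoint hypergraphs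
cost nothing: join their trees by an edge, each vertex being met on one side only.
-/

/-! ### Connected sets of nodes in trees -/

section Graph

open SimpleGraph

variable {V W : Type*} {G : SimpleGraph V} {H : SimpleGraph W}

theorem support_subset_of_preconnected_induce (hG : G.IsAcyclic) {s : Set V}
    (hs : (G.induce s).Preconnected) {u v : V} (hu : u ∈ s) (hv : v ∈ s) {p : G.Walk u v}
    (hp : p.IsPath) : ∀ w ∈ p.support, w ∈ s := by
  classical
  obtain ⟨q⟩ := hs ⟨u, hu⟩ ⟨v, hv⟩
  let q' : G.Walk u v := q.map (Embedding.induce s).toHom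
  have hpq : p = q'.bypass :=
    congrArg Subtype.val ((hG.subsingleton_path u v).elim ⟨p, hp⟩ ⟨_, q'.bypass_isPath⟩)
  intro w hw
  rw [hpq] at hw
  have hw' : w ∈ q.support.map (Embedding.induce s).toHom :=
    Walk.support_map _ q ▸ q'.support_bypass_subset_support hw
  obtain ⟨y, -, rfl⟩ := List.mem_map.1 hw'
  exact y.2

theorem preconnected_induce_image (f : G →g H) {s : Set V} (hs : (G.induce s).Preconnected) :
    (H.induce (f '' s)).Preconnected :=
  hs.map (induceHom f (Set.mapsTo_image f s)) <| by
    rintro ⟨_, v, hv, rfl⟩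
    exact ⟨⟨v, hv⟩, rfl⟩

theorem reachable_of_reachable_sum_inl {a b : V} (h : (G ⊕g H).Reachable (.inl a) (.inl b)) :
    G.Reachable a b := by
  rw [reachable_iff_reflTransGen] at h ⊢
  -- Collapsing `H` to the vertex `a` sends each edge to an edge of `G` or to a single vertex.
  refine Relation.ReflTransGen.lift' (Sum.elim id fun _ => a) ?_ _ _ h
  rintro (u | u) (v | v) huv
  · exact .single (sum_adj_inl.1 huv)
  · exact absurd huv (by simp)
  · exact absurd huv (by simp)
  · exact .refl

theorem reachable_of_reachable_sum_inr {a b : W} (h : (G ⊕g H).Reachable (.inr a) (.inr b)) :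
    H.Reachable a b :=
  reachable_of_reachable_sum_inl (h.map (Iso.sumComm (G := G) (H := H)).toHom)

theorem isBridge_sum_inl {a b : V} (h : G.IsBridge s(a, b)) :
    (G ⊕g H).IsBridge s(.inl a, .inl b) := by
  have hle : (G ⊕g H).deleteEdges {s(.inl a, .inl b)} ≤ G.deleteEdges {s(a, b)} ⊕g H := by
    rintro (u | u) (v | v) <;> simp
  exact fun hab => h (reachable_of_reachable_sum_inl (hab.mono hle))

theorem isBridge_sum_inr {a b : W} (h : H.IsBridge s(a, b)) :
    (G ⊕g H).IsBridge s(.inr a, .inr b) := by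
  have hle : (G ⊕g H).deleteEdges {s(.inr a, .inr b)} ≤ G ⊕g H.deleteEdges {s(a, b)} := by
    rintro (u | u) (v | v) <;> simp
  exact fun hab => h (reachable_of_reachable_sum_inr (hab.mono hle))

theorem isAcyclic_sum (hG : G.IsAcyclic) (hH : H.IsAcyclic) : (G ⊕g H).IsAcyclic := by
  rw [isAcyclic_iff_forall_adj_isBridge] at hG hH ⊢
  rintro (u | u) (v | v) huv
  · exact isBridge_sum_inl (hG (sum_adj_inl.1 huv))
  · exact absurd huv (by simp)
  · exact absurd huv (by simp)
  · exact isBridge_sum_inr (hH (sum_adj_inr.1 huv))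

theorem isTree_sum_sup_edge (hG : G.IsTree) (hH : H.IsTree) (v : V) (w : W) :
    ((G ⊕g H) ⊔ edge (.inl v) (.inr w)).IsTree where
  connected := hG.connected.sum_sup_edge hH.connected
  isAcyclic := (isAcyclic_sum hG.isAcyclic hH.isAcyclic).sup_edge_of_not_reachable
    (not_reachable_sum_inl_inr v w)

end Graph

/-! ### Label trees -/

section LabelTree

variable {α ι τ τ' : Type*} {dep : ι → Finset α} {E F : Finset ι} {k l : ℕ}

/-- No hyperedge of `E` shares a vertex with a hyperedge of `F`. -/
def VertexDisjoint (dep : ι → Finset α) (E F : Finset ι) : Prop :=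
  ∀ e ∈ E, ∀ f ∈ F, Disjoint (dep e) (dep f)

theorem VertexDisjoint.symm (h : VertexDisjoint dep E F) : VertexDisjoint dep F E :=
  fun f hf e he => (h e he f hf).symm

/-- The nodes whose label, a set of hyperedges, covers the vertex `x`. -/
def nodesMeeting (dep : ι → Finset α) (label : τ → Finset ι) (x : α) : Set τ :=
  {v | ∃ e ∈ label v, x ∈ dep e}

theorem nodesMeeting_insert_of_mem [DecidableEq ι] {f : ι} {x : α} (hx : x ∈ dep f)
    (label : τ → Finset ι) :
    nodesMeeting dep (fun v => insert f (label v)) x = Set.univ :=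
  Set.eq_univ_of_forall fun _ => ⟨f, Finset.mem_insert_self _ _, hx⟩

theorem nodesMeeting_insert_of_notMem [DecidableEq ι] {f : ι} {x : α} (hx : x ∉ dep f)
    (label : τ → Finset ι) :
    nodesMeeting dep (fun v => insert f (label v)) x = nodesMeeting dep label x := by
  ext v
  simp [nodesMeeting, hx]

theorem nodesMeeting_sumElim (label : τ → Finset ι) (label' : τ' → Finset ι) (x : α) :
    nodesMeeting dep (Sum.elim label label') x =
      Sum.inl '' nodesMeeting dep label x ∪ Sum.inr '' nodesMeeting dep label' x := by
  ext (v | v) <;> simp [nodesMeeting]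

theorem nodesMeeting_eq_empty_or_eq_empty (h : VertexDisjoint dep E F) {label : τ → Finset ι}
    {label' : τ' → Finset ι} (hlabel : ∀ v, label v ⊆ E) (hlabel' : ∀ v, label' v ⊆ F) (x : α) :
    nodesMeeting dep label x = ∅ ∨ nodesMeeting dep label' x = ∅ := by
  by_contra! hne
  obtain ⟨⟨u, e, he, hxe⟩, ⟨v, f, hf, hxf⟩⟩ := hne
  exact Finset.disjoint_left.1 (h e (hlabel u he) f (hlabel' v hf)) hxe hxf

/-- The data of a hypertree decomposition of width at most `k` whose bags are the full vertex sets
of their labels; the bags and the root are therefore not recorded. Nodes live in `Type` as in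
`HypertreeDecomp`. -/
structure LabelTree (dep : ι → Finset α) (E : Finset ι) (k : ℕ) where
  node : Type
  [fintypeNode : Fintype node]
  tree : SimpleGraph node
  isTree : tree.IsTree
  label : node → Finset ι
  label_subset : ∀ v, label v ⊆ E
  card_label_le : ∀ v, (label v).card ≤ k
  exists_mem_label : ∀ e ∈ E, ∃ v, e ∈ label v
  preconnected_induce : ∀ x, (tree.induce (nodesMeeting dep label x)).Preconnected

namespace LabelTree

attribute [instance] fintypeNode

/-- The one-node tree with empty label, decomposing the hypergraph without hyperedges. -/
def empty (dep : ι → Finset α) : LabelTree dep ∅ 0 where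
  node := Unit
  tree := ⊥
  isTree := .of_subsingleton
  label _ := ∅
  label_subset _ := subset_rfl
  card_label_le _ := le_rfl
  exists_mem_label := by simp
  preconnected_induce _ := .of_subsingleton

/-- The same label tree, with a weaker bound on its width. -/
def mono (L : LabelTree dep E k) (hkl : k ≤ l) : LabelTree dep E l where
  __ := L
  card_label_le v := (L.card_label_le v).trans hkl

/-- Adds the hyperedge `f` to every label. -/
def insertEdge [DecidableEq ι] (L : LabelTree dep E k) (f : ι) :
    LabelTree dep (insert f E) (k + 1) where
  node := L.node
  tree := L.tree
  isTree := L.isTree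
  label v := insert f (L.label v)
  label_subset v := Finset.insert_subset_insert f (L.label_subset v)
  card_label_le v := (Finset.card_insert_le _ _).trans (Nat.succ_le_succ (L.card_label_le v))
  exists_mem_label := by
    refine (Finset.forall_mem_insert _ _ _).2 ⟨?_, fun e he => ?_⟩
    · exact ⟨L.isTree.connected.nonempty.some, Finset.mem_insert_self _ _⟩
    · exact (L.exists_mem_label e he).imp fun _ => Finset.mem_insert_of_mem
  preconnected_induce x := by
    by_cases hx : x ∈ dep f
    · rw [nodesMeeting_insert_of_mem hx]
      exact (SimpleGraph.induceUnivIso L.tree).preconnected_iff.2 L.isTree.connected.preconnected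
    · rw [nodesMeeting_insert_of_notMem hx]
      exact L.preconnected_induce x

/-- Joins two trees by an edge between arbitrary nodes. -/
noncomputable def union [DecidableEq ι] (L : LabelTree dep E k) (M : LabelTree dep F k)
    (h : VertexDisjoint dep E F) : LabelTree dep (E ∪ F) k where
  node := L.node ⊕ M.node
  tree := (L.tree ⊕g M.tree) ⊔
    SimpleGraph.edge (.inl L.isTree.connected.nonempty.some)
      (.inr M.isTree.connected.nonempty.some)
  isTree := isTree_sum_sup_edge L.isTree M.isTree _ _
  label := Sum.elim L.label M.label
  label_subset := Sum.rec
    (fun v => (L.label_subset v).trans Finset.subset_union_left)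
    (fun v => (M.label_subset v).trans Finset.subset_union_right)
  card_label_le := Sum.rec L.card_label_le M.card_label_le
  exists_mem_label e he := by
    rw [Sum.exists]
    exact (Finset.mem_union.1 he).imp (L.exists_mem_label e) (M.exists_mem_label e)
  preconnected_induce x := by
    rw [nodesMeeting_sumElim]
    rcases nodesMeeting_eq_empty_or_eq_empty h L.label_subset M.label_subset x with hx | hx
    · rw [hx, Set.image_empty, Set.empty_union]
      exact preconnected_induce_image
        ((SimpleGraph.Hom.ofLE le_sup_left).comp SimpleGraph.Embedding.sumInr.toHom)
        (M.preconnected_induce x)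
    · rw [hx, Set.image_empty, Set.union_empty]
      exact preconnected_induce_image
        ((SimpleGraph.Hom.ofLE le_sup_left).comp SimpleGraph.Embedding.sumInl.toHom)
        (L.preconnected_induce x)

open Classical in
/-- The hypertree decomposition whose bags are the full vertex sets of the labels, with an
arbitrary root. -/
noncomputable def toHypertreeDecomp (L : LabelTree dep E k) : HypertreeDecomp dep E where
  τ := L.node
  fin := L.fintypeNode
  T := L.tree
  tree := L.isTree
  root := L.isTree.connected.nonempty.some
  ρ v := (L.label v).biUnion dep
  χ := L.label
  sub := L.label_subset
  vertexCover := by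
    rintro x ⟨e, he, hx⟩
    exact (L.exists_mem_label e he).imp fun v hv => Finset.mem_biUnion.2 ⟨e, hv, hx⟩
  primalEdgeCover e he x hx y hy := (L.exists_mem_label e he).imp fun v hv =>
    ⟨Finset.mem_biUnion.2 ⟨e, hv, hx⟩, Finset.mem_biUnion.2 ⟨e, hv, hy⟩⟩
  vertexConn x u v hu hv p hp w hw := Finset.mem_biUnion.2 <|
    support_subset_of_preconnected_induce L.isTree.isAcyclic (L.preconnected_induce x)
      (Finset.mem_biUnion.1 hu) (Finset.mem_biUnion.1 hv) hp w hw
  bagCover _ _ hx := Finset.mem_biUnion.1 hx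
  special _ e he _ _ _ hx _ := Finset.mem_biUnion.2 ⟨e, he, hx⟩

theorem width_toHypertreeDecomp_le (L : LabelTree dep E k) : L.toHypertreeDecomp.width ≤ k :=
  Finset.sup_le fun v _ => L.card_label_le v

end LabelTree

end LabelTree

/-! ### Components and hierarchy width -/

section HierarchyWidth

variable {α ι : Type*} {dep : ι → Finset α} {E F : Finset ι} {e f : ι}

theorem EdgeConn.mono (hEF : E ⊆ F) (h : EdgeConn dep E e f) : EdgeConn dep F e f :=
  Relation.ReflTransGen.mono (fun _ _ hab => ⟨hEF hab.1, hEF hab.2.1, hab.2.2⟩) _ _ h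

open Classical in
/-- The hyperedges of the connected component of `e` in the hypergraph with hyperedges `E`. -/
noncomputable def component (dep : ι → Finset α) (E : Finset ι) (e : ι) : Finset ι :=
  E.filter fun f => EdgeConn dep E e f

theorem mem_component : f ∈ component dep E e ↔ f ∈ E ∧ EdgeConn dep E e f := by
  simp [component]

theorem component_subset : component dep E e ⊆ E :=
  fun _ hf => (mem_component.1 hf).1

theorem mem_component_self (he : e ∈ E) : e ∈ component dep E e :=
  mem_component.2 ⟨he, .refl⟩

variable [DecidableEq ι]

theorem vertexDisjoint_component_sdiff :
    VertexDisjoint dep (component dep E e) (E \ component dep E e) := by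
  intro a ha b hb
  obtain ⟨haE, hea⟩ := mem_component.1 ha
  obtain ⟨hbE, hb⟩ := Finset.mem_sdiff.1 hb
  refine Finset.disjoint_left.2 fun x hxa hxb => hb ?_
  exact mem_component.2 ⟨hbE, hea.tail ⟨haE, hbE, x, hxa, hxb⟩⟩

theorem EdgeConn.of_union_left (h : VertexDisjoint dep E F) (he : e ∈ E)
    (hef : EdgeConn dep (E ∪ F) e f) : f ∈ E ∧ EdgeConn dep E e f := by
  induction hef with
  | refl => exact ⟨he, .refl⟩
  | @tail b c _ hbc ih =>
    obtain ⟨hb, heb⟩ := ih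
    obtain ⟨-, hcEF, x, hxb, hxc⟩ := hbc
    have hcF : c ∉ F := fun hc => Finset.disjoint_left.1 (h b hb c hc) hxb hxc
    have hc : c ∈ E := (Finset.mem_union.1 hcEF).resolve_right hcF
    exact ⟨hc, heb.tail ⟨hb, hc, x, hxb, hxc⟩⟩

theorem component_union_left (h : VertexDisjoint dep E F) (he : e ∈ E) :
    component dep (E ∪ F) e = component dep E e := by
  ext f
  rw [mem_component, mem_component]
  exact ⟨fun ⟨_, hef⟩ => hef.of_union_left h he, fun ⟨hf, hef⟩ =>
    ⟨Finset.mem_union_left F hf, hef.mono Finset.subset_union_left⟩⟩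

/-- The least hierarchy width left after removing one hyperedge of `C`. For `C = ∅` this is the junk
value `0`. -/
noncomputable def minEraseHw (dep : ι → Finset α) (C : Finset ι) : ℕ :=
  (C.inf fun f => (hw dep (C.erase f) : ℕ∞)).toNat

theorem exists_hw_erase_eq_minEraseHw (dep : ι → Finset α) {C : Finset ι} (hC : C.Nonempty) :
    ∃ f ∈ C, hw dep (C.erase f) = minEraseHw dep C := by
  obtain ⟨f, hf, hinf⟩ := Finset.exists_mem_eq_inf C hC fun f => (hw dep (C.erase f) : ℕ∞)
  exact ⟨f, hf, by rw [minEraseHw, hinf, ENat.toNat_natCast]⟩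

theorem hw_eq_sup_component (dep : ι → Finset α) (E : Finset ι) :
    hw dep E = E.sup fun e => 1 + minEraseHw dep (component dep E e) := by
  rw [hw]
  refine Finset.sup_congr rfl fun e _ => ?_
  rw [minEraseHw, ← Finset.inf_attach (component dep E e)]
  rfl

theorem hw_union (h : VertexDisjoint dep E F) : hw dep (E ∪ F) = max (hw dep E) (hw dep F) := by
  rw [hw_eq_sup_component dep (E ∪ F), hw_eq_sup_component dep E, hw_eq_sup_component dep F,
    Finset.sup_union]
  refine congrArg₂ max (Finset.sup_congr rfl fun e he => ?_) (Finset.sup_congr rfl fun e he => ?_)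
  · rw [component_union_left h he]
  · rw [Finset.union_comm, component_union_left h.symm he]

theorem hw_sdiff_component_le : hw dep (E \ component dep E e) ≤ hw dep E := by
  calc
    hw dep (E \ component dep E e)
      ≤ max (hw dep (component dep E e)) (hw dep (E \ component dep E e)) := le_max_right _ _
    _ = hw dep (component dep E e ∪ E \ component dep E e) :=
      (hw_union vertexDisjoint_component_sdiff).symm
    _ = hw dep E := by rw [Finset.union_sdiff_of_subset component_subset]

theorem exists_hw_erase_component_add_one_le (he : e ∈ E) :
    ∃ f ∈ component dep E e, hw dep ((component dep E e).erase f) + 1 ≤ hw dep E := by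
  obtain ⟨f, hf, hmin⟩ := exists_hw_erase_eq_minEraseHw dep ⟨e, mem_component_self he⟩
  refine ⟨f, hf, ?_⟩
  rw [hmin, add_comm, hw_eq_sup_component dep E]
  exact Finset.le_sup (f := fun e => 1 + minEraseHw dep (component dep E e)) he

theorem nonempty_labelTree_hw (dep : ι → Finset α) (E : Finset ι) :
    Nonempty (LabelTree dep E (hw dep E)) := by
  induction E using Finset.strongInduction with
  | H E ih =>
    rcases E.eq_empty_or_nonempty with rfl | ⟨e, he⟩
    · exact ⟨(LabelTree.empty dep).mono (Nat.zero_le _)⟩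
    have hCE : component dep E e ⊆ E := component_subset
    obtain ⟨f, hf, hle⟩ := exists_hw_erase_component_add_one_le (dep := dep) he
    obtain ⟨L⟩ := ih _ ((Finset.erase_ssubset hf).trans_subset hCE)
    obtain ⟨M⟩ := ih _ (Finset.sdiff_ssubset hCE ⟨e, mem_component_self he⟩)
    have L' : LabelTree dep (component dep E e) (hw dep E) :=
      Finset.insert_erase hf ▸ (L.insertEdge f).mono hle
    have N := L'.union (M.mono hw_sdiff_component_le) vertexDisjoint_component_sdiff
    rw [Finset.union_sdiff_of_subset hCE] at N
    exact ⟨N⟩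

end HierarchyWidth

/-- For every hypergraph `G`, the hypertree width of `G` is at most the hierarchy width of
`G`: there is a hypertree decomposition whose width is at most `hw G`. -/
theorem stmt6 {α ι : Type*} [DecidableEq ι] (dep : ι → Finset α) (E : Finset ι) :
    ∃ D : HypertreeDecomp dep E, D.width ≤ hw dep E := by
  obtain ⟨L⟩ := nonempty_labelTree_hw dep E
  exact ⟨L.toHypertreeDecomp, L.width_toHypertreeDecomp_le⟩
end

section
/- Fix ω > 0. There is a constant c > 0 such that for all sufficiently large n there is a choice of weights w, w_{T_i}, w_{F_i} in [−ω, ω] for which the mixing time of Gibbs sampling on the voting model with logical (respectively, ratio) semantics satisfies t_mix ≥ c·n·log n. -/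
/-- The variables of the voting model: `none` is the query `Q` (with boolean value `true`
interpreted as `Q = 1` and `false` as `Q = -1`), `some (true, i)` is the voter `T i`, and
`some (false, i)` is the voter `F i` (with `true ↦ 1`, `false ↦ 0`). -/
abbrev VotingVar (n : ℕ) := Option (Bool × Fin n)

/-- The value `±1` of the query variable in world `x`. -/
noncomputable def qVal {n : ℕ} (x : VotingVar n → Bool) : ℝ := if x none = true then 1 else -1

/-- The number of voters `T i` (if `b = true`) resp. `F i` (if `b = false`) that are set in
world `x`. -/
def numVoters {n : ℕ} (b : Bool) (x : VotingVar n → Bool) : ℕ :=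
  (Finset.univ.filter fun i : Fin n => x (some (b, i)) = true).card

/-- The prior terms `Σ_i w_{T_i} T_i + Σ_i w_{F_i} F_i` of the voting model energy. -/
noncomputable def votingPriors {n : ℕ} (wT wF : Fin n → ℝ) (x : VotingVar n → Bool) : ℝ :=
  (∑ i, wT i * (if x (some (true, i)) = true then 1 else 0)) +
    ∑ i, wF i * (if x (some (false, i)) = true then 1 else 0)

/-- Energy of the voting model with logical semantics:
`w·Q·max_i T_i − w·Q·max_i F_i + Σ_i w_{T_i}·T_i + Σ_i w_{F_i}·F_i`. -/
noncomputable def votingEnergyLogical (n : ℕ) (w : ℝ) (wT wF : Fin n → ℝ)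
    (x : VotingVar n → Bool) : ℝ :=
  w * qVal x * (if 0 < numVoters true x then 1 else 0)
    - w * qVal x * (if 0 < numVoters false x then 1 else 0)
    + votingPriors wT wF x

/-- Energy of the voting model with ratio semantics:
`w·Q·log(1+Σ_i T_i) − w·Q·log(1+Σ_i F_i) + Σ_i w_{T_i}·T_i + Σ_i w_{F_i}·F_i`. -/
noncomputable def votingEnergyRatio (n : ℕ) (w : ℝ) (wT wF : Fin n → ℝ)
    (x : VotingVar n → Bool) : ℝ :=
  w * qVal x * Real.log (1 + (numVoters true x : ℝ))
    - w * qVal x * Real.log (1 + (numVoters false x : ℝ))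
    + votingPriors wT wF x

/-- Energy of the voting model with linear semantics:
`w·Q·Σ_i T_i − w·Q·Σ_i F_i + Σ_i w_{T_i}·T_i + Σ_i w_{F_i}·F_i`. -/
noncomputable def votingEnergyLinear (n : ℕ) (w : ℝ) (wT wF : Fin n → ℝ)
    (x : VotingVar n → Bool) : ℝ :=
  w * qVal x * (numVoters true x : ℝ) - w * qVal x * (numVoters false x : ℝ)
    + votingPriors wT wF x

open Matrix Function

section MarkovChain

variable {Ω : Type*} [Fintype Ω]

lemma chebyshev_sum_le {p : Ω → ℝ} (hp : 0 ≤ p) (f : Ω → ℝ) (c : ℝ) {r : ℝ} (hr : 0 ≤ r)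
    {A : Finset Ω} (hA : ∀ y ∈ A, r ≤ |f y - c|) :
    r ^ 2 * ∑ y ∈ A, p y ≤ ∑ y, p y * (f y - c) ^ 2 := by
  calc r ^ 2 * ∑ y ∈ A, p y = ∑ y ∈ A, p y * r ^ 2 := by rw [mul_comm, Finset.sum_mul]
    _ ≤ ∑ y ∈ A, p y * (f y - c) ^ 2 := Finset.sum_le_sum fun y hy =>
        mul_le_mul_of_nonneg_left (sq_abs (f y - c) ▸ pow_le_pow_left₀ hr (hA y hy) 2) (hp y)
    _ ≤ ∑ y, p y * (f y - c) ^ 2 :=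
        Finset.sum_le_univ_sum_of_nonneg fun y => mul_nonneg (hp y) (sq_nonneg _)

/-- The variance of the statistic `f` under the distribution given by row `x` of the matrix `P`,
whose mean is `(P *ᵥ f) x`. For `P` the `t`-th power of a transition matrix this is the variance of
`f` at time `t` when starting from `x`. -/
noncomputable def rowVariance (P : Matrix Ω Ω ℝ) (f : Ω → ℝ) (x : Ω) : ℝ :=
  ∑ y, P x y * (f y - (P *ᵥ f) x) ^ 2

variable [DecidableEq Ω]

lemma pow_mulVec_of_mulVec_eq_smul {R : Type*} [CommSemiring R] {P : Matrix Ω Ω R} {g : Ω → R}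
    {r : R} (h : P *ᵥ g = r • g) (t : ℕ) : P ^ t *ᵥ g = r ^ t • g := by
  induction t with
  | zero => simp
  | succ t ih => rw [pow_succ, ← mulVec_mulVec, h, mulVec_smul, ih, smul_smul, pow_succ']

lemma rowVariance_eq_sub {P : Matrix Ω Ω ℝ} (hP : P ∈ rowStochastic ℝ Ω) (f : Ω → ℝ) (x : Ω) :
    rowVariance P f x = (P *ᵥ f ^ 2) x - (P *ᵥ f) x ^ 2 := by
  set μ := (P *ᵥ f) x
  calc rowVariance P f x
      = ∑ y, (P x y * f y ^ 2 - 2 * μ * (P x y * f y) + μ ^ 2 * P x y) :=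
        Finset.sum_congr rfl fun y _ => by ring
    _ = (P *ᵥ f ^ 2) x - 2 * μ * μ + μ ^ 2 * ∑ y, P x y := by
        rw [Finset.sum_add_distrib, Finset.sum_sub_distrib, ← Finset.mul_sum, ← Finset.mul_sum]
        rfl
    _ = (P *ᵥ f ^ 2) x - μ ^ 2 := by
        rw [sum_row_of_mem_rowStochastic hP]
        ring

namespace MixedAt

variable {P : Matrix Ω Ω ℝ} {p : Ω → ℝ} {t : ℕ}

lemma half_le_sum_compl_add_sum (h : MixedAt P p t) (hP : P ∈ rowStochastic ℝ Ω) (x y : Ω)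
    (A : Finset Ω) : 1 / 2 ≤ ∑ z ∈ Aᶜ, (P ^ t) x z + ∑ z ∈ A, (P ^ t) y z := by
  have hx := (abs_le.mp (h x A)).2
  have hy := (abs_le.mp (h y A)).1
  rw [Finset.sum_sub_distrib] at hx hy
  have hsum : ∑ z ∈ A, (P ^ t) x z + ∑ z ∈ Aᶜ, (P ^ t) x z = 1 := by
    rw [Finset.sum_add_sum_compl, sum_row_of_mem_rowStochastic (pow_mem hP t)]
  linarith

lemma sq_sub_mean_le (h : MixedAt P p t) (hP : P ∈ rowStochastic ℝ Ω) (f : Ω → ℝ) (x y : Ω) :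
    ((P ^ t *ᵥ f) x - (P ^ t *ᵥ f) y) ^ 2 ≤
      8 * (rowVariance (P ^ t) f x + rowVariance (P ^ t) f y) := by
  set α := (P ^ t *ᵥ f) x
  set β := (P ^ t *ᵥ f) y
  let A : Finset Ω := {z | |f z - α| ≤ |f z - β|}
  have hP₀ (x : Ω) : 0 ≤ (P ^ t) x := fun _ => nonneg_of_mem_rowStochastic (pow_mem hP t)
  have triangle (z : Ω) : |α - β| ≤ |f z - α| + |f z - β| := by
    simpa only [abs_sub_comm α] using abs_sub_le α (f z) β
  have hr : 0 ≤ |α - β| / 2 := by positivity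
  have tail_x : (|α - β| / 2) ^ 2 * ∑ z ∈ Aᶜ, (P ^ t) x z ≤ rowVariance (P ^ t) f x := by
    refine chebyshev_sum_le (hP₀ x) f α hr fun z hz => ?_
    have : |f z - β| < |f z - α| := by simpa [A] using hz
    linarith [triangle z]
  have tail_y : (|α - β| / 2) ^ 2 * ∑ z ∈ A, (P ^ t) y z ≤ rowVariance (P ^ t) f y := by
    refine chebyshev_sum_le (hP₀ y) f β hr fun z hz => ?_
    have : |f z - α| ≤ |f z - β| := by simpa [A] using hz
    linarith [triangle z]
  have overlap := mul_le_mul_of_nonneg_left (h.half_le_sum_compl_add_sum hP x y A)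
    (sq_nonneg (|α - β| / 2))
  rw [← sq_abs]
  linarith

end MixedAt

end MarkovChain

section GibbsSampling

variable {V S : Type*} [Fintype V] [DecidableEq V] [Fintype S] [DecidableEq S]

lemma sum_ite_eq_off_eq_sum_update {M : Type*} [AddCommMonoid M] (x : V → S) (v : V)
    (g : (V → S) → M) :
    ∑ y, (if ∀ u, u ≠ v → x u = y u then g y else 0) = ∑ s, g (update x v s) := by
  rw [← Finset.sum_filter]
  refine Finset.sum_nbij' (fun y => y v) (update x v) (by simp) ?_ ?_ (by simp) ?_
  · intro s _
    simp +contextual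
  · intro y hy
    exact update_eq_iff.2 ⟨rfl, (Finset.mem_filter.1 hy).2⟩
  · intro y hy
    exact congrArg g (update_eq_iff.2 ⟨rfl, (Finset.mem_filter.1 hy).2⟩).symm

lemma gibbsP_mulVec_apply (energy : (V → S) → ℝ) (g : (V → S) → ℝ) (x : V → S) :
    (gibbsP energy *ᵥ g) x = (Fintype.card V : ℝ)⁻¹ * ∑ v,
      (∑ s, Real.exp (energy (update x v s)) * g (update x v s)) /
        ∑ s, Real.exp (energy (update x v s)) := by
  simp only [mulVec, dotProduct, gibbsP, mul_assoc, Finset.sum_mul, ← Finset.mul_sum, ite_mul,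
    zero_mul]
  rw [Finset.sum_comm]
  congr! 2 with v
  rw [sum_ite_eq_off_eq_sum_update x v fun y => Real.exp (energy y) / _ * g y, Finset.sum_div]
  simp only [div_mul_eq_mul_div]

lemma gibbsP_mem_rowStochastic [Nonempty V] [Nonempty S] (energy : (V → S) → ℝ) :
    gibbsP energy ∈ rowStochastic ℝ (V → S) := by
  refine mem_rowStochastic.2 ⟨fun x y => ?_, funext fun x => ?_⟩
  · unfold gibbsP
    refine mul_nonneg (by positivity) (Finset.sum_nonneg fun v _ => ?_)
    split_ifs <;> positivity
  · have hZ (v : V) : ∑ s, Real.exp (energy (update x v s)) ≠ 0 :=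
      (Finset.sum_pos (fun s _ => Real.exp_pos _) Finset.univ_nonempty).ne'
    simp [gibbsP_mulVec_apply, hZ]

end GibbsSampling

section Hypercube

variable {V : Type*} [Fintype V]

/-- The sign `±1` of a boolean coordinate, with `true ↦ 1` as in `qVal`. -/
def spin : Bool → ℝ
  | true => 1
  | false => -1

/-- The sum of the coordinates of a hypercube state, read as signs `±1`: the statistic that tells
the two constant starting states apart. -/
def magnetization (x : V → Bool) : ℝ := ∑ v, spin (x v)

lemma spin_sq (b : Bool) : spin b ^ 2 = 1 := by
  cases b <;> simp [spin]

lemma magnetization_const (b : Bool) :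
    magnetization (fun _ : V => b) = Fintype.card V * spin b := by
  simp [magnetization]

variable [DecidableEq V]

lemma magnetization_update (x : V → Bool) (v : V) (b : Bool) :
    magnetization (update x v b) = magnetization x - spin (x v) + spin b := by
  rw [magnetization, magnetization, ← Finset.add_sum_erase _ _ (Finset.mem_univ v),
    ← Finset.add_sum_erase _ _ (Finset.mem_univ v), update_self,
    Finset.sum_congr rfl fun u hu => by rw [update_of_ne (Finset.ne_of_mem_erase hu)]]
  ring

/-- The lazy random walk on the hypercube `V → Bool`, which replaces a uniformly chosen coordinate
by a fair coin flip; it is Gibbs sampling at zero energy. -/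
noncomputable abbrev hypercubeWalk (V : Type*) [Fintype V] [DecidableEq V] :
    Matrix (V → Bool) (V → Bool) ℝ :=
  gibbsP 0

lemma hypercubeWalk_mulVec_apply (g : (V → Bool) → ℝ) (x : V → Bool) :
    (hypercubeWalk V *ᵥ g) x =
      (Fintype.card V : ℝ)⁻¹ * ∑ v, (g (update x v true) + g (update x v false)) / 2 := by
  simp [gibbsP_mulVec_apply]

variable [Nonempty V]

lemma hypercubeWalk_mulVec_magnetization :
    hypercubeWalk V *ᵥ magnetization = (1 - 1 / (Fintype.card V : ℝ)) • magnetization := by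
  funext x
  have average (v : V) :
      (magnetization (update x v true) + magnetization (update x v false)) / 2 =
        magnetization x - spin (x v) := by
    simp only [magnetization_update, spin]
    ring
  have hm : (Fintype.card V : ℝ) ≠ 0 := by simp
  calc (hypercubeWalk V *ᵥ magnetization) x
      = (Fintype.card V : ℝ)⁻¹ * (Fintype.card V * magnetization x - magnetization x) := by
        simp only [hypercubeWalk_mulVec_apply, average, Finset.sum_sub_distrib, Finset.sum_const,
          Finset.card_univ, nsmul_eq_mul]
        rw [magnetization]
    _ = (1 - 1 / (Fintype.card V : ℝ)) * magnetization x := by field_simp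

lemma hypercubeWalk_mulVec_magnetization_sq_sub :
    hypercubeWalk V *ᵥ (fun y => magnetization y ^ 2 - Fintype.card V) =
      (1 - 2 / (Fintype.card V : ℝ)) • fun y => magnetization y ^ 2 - Fintype.card V := by
  funext x
  have average (v : V) :
      ((magnetization (update x v true) ^ 2 - Fintype.card V) +
          (magnetization (update x v false) ^ 2 - Fintype.card V)) / 2 =
        (magnetization x ^ 2 + 2 - Fintype.card V) - 2 * magnetization x * spin (x v) := by
    have hsq := spin_sq (x v)
    simp only [magnetization_update, spin] at hsq ⊢
    linear_combination hsq
  have hm : (Fintype.card V : ℝ) ≠ 0 := by simp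
  calc (hypercubeWalk V *ᵥ fun y => magnetization y ^ 2 - Fintype.card V) x
      = (Fintype.card V : ℝ)⁻¹ * (Fintype.card V * (magnetization x ^ 2 + 2 - Fintype.card V) -
          2 * magnetization x * magnetization x) := by
        simp only [hypercubeWalk_mulVec_apply, average]
        rw [Finset.sum_sub_distrib, Finset.sum_const, Finset.card_univ, nsmul_eq_mul,
          ← Finset.mul_sum, magnetization]
    _ = (1 - 2 / (Fintype.card V : ℝ)) * (magnetization x ^ 2 - Fintype.card V) := by
        field_simp
        ring

lemma hypercubeWalk_pow_mulVec_magnetization (t : ℕ) (x : V → Bool) :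
    (hypercubeWalk V ^ t *ᵥ magnetization) x =
      (1 - 1 / (Fintype.card V : ℝ)) ^ t * magnetization x :=
  congrFun (pow_mulVec_of_mulVec_eq_smul hypercubeWalk_mulVec_magnetization t) x

lemma hypercubeWalk_pow_mulVec_magnetization_sq (t : ℕ) (x : V → Bool) :
    (hypercubeWalk V ^ t *ᵥ magnetization ^ 2) x =
      (1 - 2 / (Fintype.card V : ℝ)) ^ t * (magnetization x ^ 2 - Fintype.card V) +
        Fintype.card V := by
  have hone : hypercubeWalk V ^ t *ᵥ 1 = 1 :=
    one_vecMul_of_mem_rowStochastic (pow_mem (gibbsP_mem_rowStochastic 0) t)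
  have heigen := pow_mulVec_of_mulVec_eq_smul (hypercubeWalk_mulVec_magnetization_sq_sub (V := V)) t
  have hdecomp : magnetization ^ 2 = (fun y : V → Bool => magnetization y ^ 2 - Fintype.card V) +
      (Fintype.card V : ℝ) • 1 := by
    funext y
    simp
  rw [hdecomp, mulVec_add, mulVec_smul, heigen, hone]
  simp

end Hypercube

section NontrivialHypercube

variable {V : Type*} [Fintype V] [DecidableEq V] [Nontrivial V]

lemma rowVariance_hypercubeWalk_pow_le (t : ℕ) (x : V → Bool) :
    rowVariance (hypercubeWalk V ^ t) magnetization x ≤ Fintype.card V := by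
  rw [rowVariance_eq_sub (pow_mem (gibbsP_mem_rowStochastic 0) t),
    hypercubeWalk_pow_mulVec_magnetization, hypercubeWalk_pow_mulVec_magnetization_sq]
  set m := (Fintype.card V : ℝ)
  have hm : 2 ≤ m := Nat.ofNat_le_cast.2 Fintype.one_lt_card
  have hbase : 0 ≤ 1 - 2 / m := sub_nonneg.2 (div_le_one_of_le₀ hm (by linarith))
  have hpow : (1 - 2 / m) ^ t ≤ ((1 - 1 / m) ^ t) ^ 2 := by
    rw [pow_right_comm]
    refine pow_le_pow_left₀ hbase ?_ t
    linear_combination sq_nonneg (1 / m)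
  have hnonneg : 0 ≤ (1 - 2 / m) ^ t * m := by positivity
  linear_combination hnonneg + mul_le_mul_of_nonneg_right hpow (sq_nonneg (magnetization x))

lemma MixedAt.sq_pow_mul_card_le_four {p : (V → Bool) → ℝ} {t : ℕ}
    (h : MixedAt (hypercubeWalk V) p t) :
    ((1 - 1 / (Fintype.card V : ℝ)) ^ t) ^ 2 * Fintype.card V ≤ 4 := by
  have hmeans := h.sq_sub_mean_le (gibbsP_mem_rowStochastic 0) magnetization
    (fun _ => true) (fun _ => false)
  have hvar_true := rowVariance_hypercubeWalk_pow_le t (fun _ : V => true)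
  have hvar_false := rowVariance_hypercubeWalk_pow_le t (fun _ : V => false)
  simp only [hypercubeWalk_pow_mulVec_magnetization, magnetization_const, spin] at hmeans
  have hm : 0 < (Fintype.card V : ℝ) := by simp [Fintype.card_pos]
  refine le_of_mul_le_mul_right ?_ hm
  linarith

end NontrivialHypercube

lemma mul_log_le_of_sq_pow_mul_le {m C : ℝ} (hm : 1 < m) {t : ℕ}
    (h : ((1 - 1 / m) ^ t) ^ 2 * m ≤ C) : (m - 1) / 2 * Real.log (m / C) ≤ t := by
  have hm_sub : 0 < m - 1 := sub_pos.2 hm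
  have hbase : 1 - 1 / m = (m - 1) / m := by field_simp
  have hbase_pos : 0 < 1 - 1 / m := hbase ▸ by positivity
  have hlog_base : -(1 / (m - 1)) ≤ Real.log (1 - 1 / m) := by
    calc -(1 / (m - 1)) = 1 - (1 - 1 / m)⁻¹ := by
          rw [hbase]
          field_simp
          ring
      _ ≤ Real.log (1 - 1 / m) := Real.one_sub_inv_le_log_of_pos hbase_pos
  have hlog : 2 * (t * Real.log (1 - 1 / m)) + Real.log m ≤ Real.log C := by
    have := Real.log_le_log (by positivity) h
    rwa [Real.log_mul (by positivity) (by positivity), Real.log_pow, Real.log_pow,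
      Nat.cast_ofNat] at this
  have hlog_div : Real.log (m / C) ≤ 2 * t / (m - 1) := by
    have hC : 0 < C := lt_of_lt_of_le (by positivity) h
    rw [Real.log_div (by positivity) hC.ne']
    linear_combination hlog + 2 * mul_le_mul_of_nonneg_left hlog_base t.cast_nonneg
  rw [le_div_iff₀ hm_sub] at hlog_div
  linarith

lemma MixedAt.mul_log_card_le {V : Type*} [Fintype V] [DecidableEq V] [Nontrivial V]
    {p : (V → Bool) → ℝ} {t : ℕ} (h : MixedAt (hypercubeWalk V) p t) :
    ((Fintype.card V : ℝ) - 1) / 2 * Real.log (Fintype.card V / 4) ≤ t :=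
  mul_log_le_of_sq_pow_mul_le (by exact_mod_cast Fintype.one_lt_card) h.sq_pow_mul_card_le_four

section VotingModel

variable (n : ℕ)

lemma votingEnergyLogical_zero : votingEnergyLogical n 0 0 0 = 0 := by
  funext x
  simp [votingEnergyLogical, votingPriors]

lemma votingEnergyRatio_zero : votingEnergyRatio n 0 0 0 = 0 := by
  funext x
  simp [votingEnergyRatio, votingPriors]

variable {n}

lemma MixedAt.half_mul_log_le_of_votingVar (hn : 3 ≤ n) {p : (VotingVar n → Bool) → ℝ} {t : ℕ}
    (h : MixedAt (hypercubeWalk (VotingVar n)) p t) : 1 / 2 * n * Real.log n ≤ t := by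
  have : NeZero n := ⟨by omega⟩
  have hn' : (3 : ℝ) ≤ n := by exact_mod_cast hn
  have hcard : (Fintype.card (VotingVar n) : ℝ) = 2 * n + 1 := by simp
  have hlog : Real.log n ≤ 2 * Real.log ((2 * n + 1) / 4) := by
    calc Real.log n ≤ Real.log (((2 * n + 1) / 4) ^ 2) :=
          Real.log_le_log (by positivity) (by nlinarith)
      _ = 2 * Real.log ((2 * n + 1) / 4) := by simp [Real.log_pow]
  calc 1 / 2 * n * Real.log n ≤ 1 / 2 * n * (2 * Real.log ((2 * n + 1) / 4)) := by gcongr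
    _ = ((2 * n + 1 : ℝ) - 1) / 2 * Real.log ((2 * n + 1) / 4) := by ring
    _ ≤ t := hcard ▸ h.mul_log_card_le

end VotingModel

/-- **Lower bound for the voting model, logical and ratio semantics.**  Fix `ω > 0`.  There
is a constant `c > 0` such that for all sufficiently large `n` there is a choice of weights
in `[−ω, ω]` for which Gibbs sampling on the voting model with logical (respectively, ratio)
semantics is not mixed before time `c·n·log n`. -/
theorem stmt12 (ω : ℝ) (hω : 0 < ω) :
    ∃ c : ℝ, 0 < c ∧ ∃ N : ℕ, ∀ n : ℕ, N ≤ n →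
      (∃ (w : ℝ) (wT wF : Fin n → ℝ),
        w ∈ Set.Icc (-ω) ω ∧ (∀ i, wT i ∈ Set.Icc (-ω) ω) ∧ (∀ i, wF i ∈ Set.Icc (-ω) ω) ∧
        ∀ t : ℕ, MixedAt (gibbsP (votingEnergyLogical n w wT wF))
            (gibbsPi (votingEnergyLogical n w wT wF)) t →
          c * n * Real.log n ≤ (t : ℝ)) ∧
      (∃ (w : ℝ) (wT wF : Fin n → ℝ),
        w ∈ Set.Icc (-ω) ω ∧ (∀ i, wT i ∈ Set.Icc (-ω) ω) ∧ (∀ i, wF i ∈ Set.Icc (-ω) ω) ∧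
        ∀ t : ℕ, MixedAt (gibbsP (votingEnergyRatio n w wT wF))
            (gibbsPi (votingEnergyRatio n w wT wF)) t →
          c * n * Real.log n ≤ (t : ℝ)) := by
  have hzero : (0 : ℝ) ∈ Set.Icc (-ω) ω := ⟨by linarith, hω.le⟩
  refine ⟨1 / 2, by norm_num, 3, fun n hn => ⟨⟨0, 0, 0, hzero, fun _ => hzero, fun _ => hzero, ?_⟩,
    ⟨0, 0, 0, hzero, fun _ => hzero, fun _ => hzero, ?_⟩⟩⟩
  · intro t h
    rw [votingEnergyLogical_zero] at h
    exact h.half_mul_log_le_of_votingVar hn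
  · intro t h
    rw [votingEnergyRatio_zero] at h
    exact h.half_mul_log_le_of_votingVar hn
end
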